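/- arXiv:1902.04739 — 3 statements merged into one kernel-verified Lean document; each statement's English description precedes it below -/
import Mathlib

section
/- Let N ≥ 2 and s ∈ [1/2, 1), or N ≥ 3 and s = 1. There exists C = C(N, s) > 0 such that for every radial smooth compactly supported u : ℝ^N → ℂ (i.e. u(x) depends only on |x|) and every x ∈ ℝ^N with x ≠ 0, |x|^{(N−2s)/2} |u(x)| ≤ C ‖u‖_{L²}^{1−s} ‖∇u‖_{L²}^{s}. -/
open MeasureTheory Real
open scoped BigOperators

/-- The squared Euclidean norm of the gradient: `∑ i |∂ᵢ u(x)|²`. -/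
noncomputable def gradSq {N : ℕ} {F : Type*} [NormedAddCommGroup F] [NormedSpace ℝ F]
    (u : EuclideanSpace ℝ (Fin N) → F) (x : EuclideanSpace ℝ (Fin N)) : ℝ :=
  ∑ i, ‖fderiv ℝ u x (EuclideanSpace.single i 1)‖ ^ 2

lemma sqle {a b : ℝ} (h : a ^ 2 ≤ b ^ 2) (hb : 0 ≤ b) : a ≤ b :=
  (le_abs_self a).trans (abs_le_of_sq_le_sq h hb)

lemma sq_le_of_forall {x a b : ℝ} (hx : 0 ≤ x) (ha : 0 ≤ a) (hb : 0 ≤ b)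
    (h : ∀ l > 0, 2 * x ≤ l * a + b / l) : x ^ 2 ≤ a * b := by
  have := discrim_le_zero (a := a) (b := -2 * x) (c := b) (by
    intro l
    rcases le_or_gt l 0 with hl | hl
    · nlinarith [mul_nonneg ha (mul_self_nonneg l), mul_nonneg hx (neg_nonneg.2 hl)]
    · have h1 := mul_le_mul_of_nonneg_left (h l hl) hl.le
      have : l * (l * a + b / l) = a * (l * l) + b := by field_simp
      nlinarith)
  unfold discrim at this
  nlinarith

lemma wint {n : ℕ} {f : ℝ → ℂ} (hf : Continuous f) (hc : HasCompactSupport f) (r : ℝ) :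
    IntegrableOn (fun t => t ^ n * ‖f t‖ ^ 2) (Set.Ioi r) := by
  apply Integrable.integrableOn
  apply Continuous.integrable_of_hasCompactSupport (by fun_prop)
  apply hc.mono
  intro t ht
  simp only [Function.mem_support] at *
  rintro h0; simp [h0] at ht

lemma wmono {n : ℕ} {f : ℝ → ℂ} (hf : Continuous f) (hc : HasCompactSupport f) {r : ℝ}
    (hr : 0 < r) : ∫ t in Set.Ioi r, t ^ n * ‖f t‖ ^ 2 ≤ ∫ t in Set.Ioi 0, t ^ n * ‖f t‖ ^ 2 := by
  apply setIntegral_mono_set (wint hf hc 0)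
  · filter_upwards [ae_restrict_mem measurableSet_Ioi] with t ht
    have : 0 < t := ht
    simp only [Pi.zero_apply]; positivity
  · exact (Set.Ioi_subset_Ioi hr.le).eventuallyLE

lemma lem1 {n : ℕ} {f : ℝ → ℂ} (hf : ContDiff ℝ 1 f) (hc : HasCompactSupport f) {r : ℝ}
    (hr : 0 < r) : (r ^ n * ‖f r‖ ^ 2) ^ 2 ≤ 4 * ((∫ t in Set.Ioi 0, t ^ n * ‖f t‖ ^ 2) *
      ∫ t in Set.Ioi 0, t ^ n * ‖deriv f t‖ ^ 2) := by
  have hf' : Continuous (deriv f) := hf.continuous_deriv le_rfl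
  have hc' : HasCompactSupport (deriv f) := hc.deriv
  have key : ∀ l > 0, 2 * (r ^ n * ‖f r‖ ^ 2 / 2) ≤
      l * (∫ t in Set.Ioi 0, t ^ n * ‖f t‖ ^ 2) + (∫ t in Set.Ioi 0, t ^ n * ‖deriv f t‖ ^ 2) / l := by
    intro l hl
    have hg : ContDiff ℝ 1 (fun t => ‖f t‖ ^ 2) := hf.norm_sq ℝ
    have hgc : HasCompactSupport (fun t => ‖f t‖ ^ 2) := by
      apply hc.mono
      intro t ht
      simp only [Function.mem_support] at *
      rintro h0; simp [h0] at ht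
    have hd : ∀ t, ‖deriv (fun t => ‖f t‖ ^ 2) t‖ ≤ 2 * (‖f t‖ * ‖deriv f t‖) := by
      intro t
      have := ((hf.differentiable one_ne_zero) t).hasDerivAt.norm_sq
      rw [this.deriv, norm_mul]
      have := norm_inner_le_norm (𝕜 := ℝ) (f t) (deriv f t)
      simpa using this
    have e := hgc.integral_Ioi_deriv_eq hg r
    have i1 := (wint (n := n) hf.continuous hc r).const_mul l
    have i2 := (wint (n := n) hf' hc' r).div_const l
    have e2 : r ^ n * ‖f r‖ ^ 2 = ∫ t in Set.Ioi r, - (r ^ n * deriv (fun t => ‖f t‖ ^ 2) t) := by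
      rw [integral_neg, integral_const_mul, e]; ring
    calc 2 * (r ^ n * ‖f r‖ ^ 2 / 2) = ∫ t in Set.Ioi r, - (r ^ n * deriv (fun t => ‖f t‖ ^ 2) t) := by
          rw [← e2]; ring
      _ ≤ ∫ t in Set.Ioi r, (l * (t ^ n * ‖f t‖ ^ 2) + (t ^ n * ‖deriv f t‖ ^ 2) / l) := by
          apply setIntegral_mono_on _ (i1.add i2) measurableSet_Ioi
          · intro t ht
            have ht : r < t := ht
            have h1 : r ^ n ≤ t ^ n := pow_le_pow_left₀ hr.le ht.le n
            have h2 := (abs_le.1 (hd t)).1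
            have h3 : 2 * (‖f t‖ * ‖deriv f t‖) ≤ l * ‖f t‖ ^ 2 + ‖deriv f t‖ ^ 2 / l := by
              have : l * ‖f t‖ ^ 2 + ‖deriv f t‖ ^ 2 / l - 2 * (‖f t‖ * ‖deriv f t‖) =
                (l * ‖f t‖ - ‖deriv f t‖) ^ 2 / l := by field_simp; ring
              have : 0 ≤ (l * ‖f t‖ - ‖deriv f t‖) ^ 2 / l := by positivity
              linarith
            calc - (r ^ n * deriv (fun t => ‖f t‖ ^ 2) t) ≤ r ^ n * (2 * (‖f t‖ * ‖deriv f t‖)) := by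
                  nlinarith [pow_pos hr n]
              _ ≤ t ^ n * (2 * (‖f t‖ * ‖deriv f t‖)) := by gcongr
              _ ≤ t ^ n * (l * ‖f t‖ ^ 2 + ‖deriv f t‖ ^ 2 / l) := by
                  have : 0 < t := hr.trans ht
                  gcongr
              _ = l * (t ^ n * ‖f t‖ ^ 2) + (t ^ n * ‖deriv f t‖ ^ 2) / l := by ring
          · apply Integrable.integrableOn
            apply Integrable.neg
            apply Integrable.const_mul
            exact (hg.continuous_deriv le_rfl).integrable_of_hasCompactSupport hgc.deriv
      _ = l * (∫ t in Set.Ioi r, t ^ n * ‖f t‖ ^ 2) + (∫ t in Set.Ioi r, t ^ n * ‖deriv f t‖ ^ 2) / l := by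
          rw [integral_add i1 i2, integral_const_mul, integral_div]
      _ ≤ _ := by
          gcongr l * ?_ + ?_ / l
          · exact wmono hf.continuous hc hr
          · exact wmono hf' hc' hr
  have := sq_le_of_forall (by positivity)
    (setIntegral_nonneg measurableSet_Ioi fun t (ht : 0 < t) => by positivity)
    (setIntegral_nonneg measurableSet_Ioi fun t (ht : 0 < t) => by positivity) key
  linarith

lemma lem2 {n : ℕ} {f : ℝ → ℂ} (hf : ContDiff ℝ 1 f) (hc : HasCompactSupport f) {r R K : ℝ}
    (hr : 0 < r) (hrR : r ≤ R) (hK : ∫ t in r..R, (t ^ n)⁻¹ ≤ K) :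
    ‖f R - f r‖ ^ 2 ≤ (∫ t in Set.Ioi 0, t ^ n * ‖deriv f t‖ ^ 2) * K := by
  have hf' : Continuous (deriv f) := hf.continuous_deriv le_rfl
  have hc' : HasCompactSupport (deriv f) := hc.deriv
  have hii : IntervalIntegrable (fun t : ℝ => (t ^ n)⁻¹) volume r R := by
    apply ContinuousOn.intervalIntegrable
    rw [Set.uIcc_of_le hrR]
    apply ContinuousOn.inv₀ (by fun_prop)
    intro t ht
    have : 0 < t := hr.trans_le ht.1
    positivity
  have key : ∀ l > 0, 2 * ‖f R - f r‖ ≤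
      l * (∫ t in Set.Ioi 0, t ^ n * ‖deriv f t‖ ^ 2) + K / l := by
    intro l hl
    have e : ∫ t in r..R, deriv f t = f R - f r :=
      intervalIntegral.integral_deriv_eq_sub (fun t _ => hf.differentiable one_ne_zero t)
        (hf'.intervalIntegrable _ _)
    have h0 : ‖f R - f r‖ ≤ ∫ t in r..R, ‖deriv f t‖ := by
      rw [← e]; exact intervalIntegral.norm_integral_le_integral_norm hrR
    have ci : IntervalIntegrable (fun t : ℝ => l * (t ^ n * ‖deriv f t‖ ^ 2)) volume r R :=
      Continuous.intervalIntegrable (by fun_prop) _ _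
    calc 2 * ‖f R - f r‖ ≤ ∫ t in r..R, 2 * ‖deriv f t‖ := by
          rw [intervalIntegral.integral_const_mul]; linarith
      _ ≤ ∫ t in r..R, (l * (t ^ n * ‖deriv f t‖ ^ 2) + (t ^ n)⁻¹ / l) := by
          apply intervalIntegral.integral_mono_on hrR
            (Continuous.intervalIntegrable (by fun_prop) _ _)
            (ci.add (hii.div_const l))
          intro t ht
          have : 0 < t := hr.trans_le ht.1
          have : l * (t ^ n * ‖deriv f t‖ ^ 2) + (t ^ n)⁻¹ / l - 2 * ‖deriv f t‖ =
            (l * t ^ n * ‖deriv f t‖ - 1) ^ 2 / (l * t ^ n) := by field_simp; ring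
          have : 0 ≤ (l * t ^ n * ‖deriv f t‖ - 1) ^ 2 / (l * t ^ n) := by positivity
          linarith
      _ = l * (∫ t in r..R, t ^ n * ‖deriv f t‖ ^ 2) + (∫ t in r..R, (t ^ n)⁻¹) / l := by
          rw [intervalIntegral.integral_add ci (hii.div_const l),
            intervalIntegral.integral_const_mul, intervalIntegral.integral_div]
      _ ≤ _ := by
          gcongr l * ?_ + ?_ / l
          rw [intervalIntegral.integral_of_le hrR]
          apply setIntegral_mono_set (wint hf' hc' 0)
          · filter_upwards [ae_restrict_mem measurableSet_Ioi] with t ht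
            have : 0 < t := ht
            simp only [Pi.zero_apply]; positivity
          · exact (Set.Ioc_subset_Ioi_self.trans (Set.Ioi_subset_Ioi hr.le)).eventuallyLE
  refine sq_le_of_forall (by positivity)
    (setIntegral_nonneg measurableSet_Ioi fun t (ht : 0 < t) => by positivity) ?_ key
  refine le_trans ?_ hK
  apply intervalIntegral.integral_nonneg hrR
  intro t ht
  have : 0 < t := hr.trans_le ht.1
  positivity

lemma K1 {n : ℕ} (hn : 2 ≤ n) {r R : ℝ} (hr : 0 < r) (hrR : r ≤ R) :
    ∫ t in r..R, (t ^ n)⁻¹ ≤ r * (r ^ n)⁻¹ := by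
  obtain ⟨k, rfl⟩ := Nat.exists_eq_add_of_le hn
  have h0 : (0:ℝ) ∉ Set.uIcc r R := by
    rw [Set.uIcc_of_le hrR]; intro h; linarith [h.1]
  have c2 : ContinuousOn (fun t : ℝ => t ^ (-2 : ℤ)) (Set.uIcc r R) :=
    fun t ht => (continuousAt_zpow₀ t _ (Or.inl fun h => h0 (h ▸ ht))).continuousWithinAt
  calc ∫ t in r..R, (t ^ (2 + k))⁻¹ ≤ ∫ t in r..R, (r ^ k)⁻¹ * t ^ (-2 : ℤ) := by
        apply intervalIntegral.integral_mono_on hrR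
        · apply ContinuousOn.intervalIntegrable
          apply ContinuousOn.inv₀ (by fun_prop)
          intro t ht
          exact pow_ne_zero _ fun h => h0 (h ▸ ht)
        · exact (ContinuousOn.intervalIntegrable c2).const_mul _
        · intro t ht
          have : 0 < t := hr.trans_le ht.1
          rw [pow_add, mul_inv, mul_comm, zpow_neg]
          have := ht.1
          norm_cast
          gcongr
    _ ≤ _ := by
        rw [intervalIntegral.integral_const_mul, integral_zpow (Or.inr ⟨by norm_num, h0⟩)]
        have hR : 0 < R := hr.trans_le hrR
        norm_num
        rw [pow_add, mul_inv, ← mul_assoc]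
        have : r * (r ^ 2)⁻¹ = r⁻¹ := by field_simp
        rw [this, mul_comm]
        gcongr
        linarith [inv_pos.2 hR]

lemma K2 {n : ℕ} (hn : 1 ≤ n) {r R p : ℝ} (hr : 0 < r) (hrR : r ≤ R) (hp : 0 < p) :
    ∫ t in r..R, (t ^ n)⁻¹ ≤ r * (r ^ n)⁻¹ * ((R / r) ^ p / p) := by
  obtain ⟨k, rfl⟩ := Nat.exists_eq_add_of_le hn
  have h0 : (0:ℝ) ∉ Set.uIcc r R := by
    rw [Set.uIcc_of_le hrR]; intro h; linarith [h.1]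
  have hR : 0 < R := hr.trans_le hrR
  calc ∫ t in r..R, (t ^ (1 + k))⁻¹ ≤ ∫ t in r..R, (r ^ k)⁻¹ * t⁻¹ := by
        apply intervalIntegral.integral_mono_on hrR
        · apply ContinuousOn.intervalIntegrable
          apply ContinuousOn.inv₀ (by fun_prop)
          intro t ht
          exact pow_ne_zero _ fun h => h0 (h ▸ ht)
        · apply IntervalIntegrable.const_mul
          apply ContinuousOn.intervalIntegrable
          apply ContinuousOn.inv₀ (by fun_prop)
          intro t ht
          exact fun h => h0 (h ▸ ht)
        · intro t ht
          have : 0 < t := hr.trans_le ht.1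
          have := ht.1
          rw [pow_add, mul_inv, mul_comm, pow_one]
          gcongr
    _ ≤ _ := by
        rw [intervalIntegral.integral_const_mul, integral_inv h0]
        have : r * (r ^ (1 + k))⁻¹ = (r ^ k)⁻¹ := by rw [pow_add]; field_simp
        rw [this]
        gcongr
        exact Real.log_le_rpow_div (by positivity) hp

lemma core1 (n : ℕ) (hn : 2 ≤ n) (f : ℝ → ℂ) (hf : ContDiff ℝ 1 f) (hc : HasCompactSupport f)
    (r : ℝ) (hr : 0 < r) :
    r ^ (((n : ℝ) + 1 - 2 * 1) / 2) * ‖f r‖ ≤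
      (∫ t in Set.Ioi 0, t ^ n * ‖deriv f t‖ ^ 2) ^ ((1 : ℝ) / 2) := by
  obtain ⟨R, hR, hrR⟩ : ∃ R, f R = 0 ∧ r ≤ R := by
    have h2f := hc
    rw [hasCompactSupport_iff_eventuallyEq, Filter.coclosedCompact_eq_cocompact] at h2f
    have := (h2f.filter_mono _root_.atTop_le_cocompact).and (Filter.eventually_ge_atTop r)
    obtain ⟨R, h1, h2⟩ := this.exists
    exact ⟨R, h1, h2⟩
  have h := lem2 (n := n) hf hc hr hrR (K1 hn hr hrR)
  rw [hR, zero_sub, norm_neg] at h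
  rw [← Real.sqrt_eq_rpow]
  apply Real.le_sqrt_of_sq_le
  rw [mul_pow]
  have e : (r ^ (((n : ℝ) + 1 - 2 * 1) / 2)) ^ 2 = r ^ n / r := by
    rw [← Real.rpow_natCast, ← Real.rpow_mul hr.le]
    have : ((n : ℝ) + 1 - 2 * 1) / 2 * (2 : ℕ) = n - 1 := by push_cast; ring
    rw [this, Real.rpow_sub_one hr.ne', Real.rpow_natCast]
  rw [e]
  calc _ ≤ r ^ n / r * ((∫ t in Set.Ioi 0, t ^ n * ‖deriv f t‖ ^ 2) * (r * (r ^ n)⁻¹)) := by gcongr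
    _ = _ := by field_simp

lemma core2 (n : ℕ) (hn : 1 ≤ n) (s : ℝ) (hs : 1 / 2 ≤ s) (hs1 : s < 1)
    (f : ℝ → ℂ) (hf : ContDiff ℝ 1 f) (hc : HasCompactSupport f)
    (r : ℝ) (hr : 0 < r) :
    r ^ (((n : ℝ) + 1 - 2 * s) / 2) * ‖f r‖ ≤ (√2 + √(1 / (2 * (1 - s)))) *
      ((∫ t in Set.Ioi 0, t ^ n * ‖f t‖ ^ 2) ^ ((1 - s) / 2) *
      (∫ t in Set.Ioi 0, t ^ n * ‖deriv f t‖ ^ 2) ^ (s / 2)) := by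
  have hA : 0 ≤ ∫ t in Set.Ioi 0, t ^ n * ‖f t‖ ^ 2 :=
    setIntegral_nonneg measurableSet_Ioi fun t (ht : 0 < t) => by positivity
  have hB : 0 ≤ ∫ t in Set.Ioi 0, t ^ n * ‖deriv f t‖ ^ 2 :=
    setIntegral_nonneg measurableSet_Ioi fun t (ht : 0 < t) => by positivity
  have l1 := fun {ρ : ℝ} (hρ : 0 < ρ) => lem1 (n := n) hf hc hρ
  have l2 := fun {R : ℝ} (hrR : r ≤ R) => lem2 (n := n) hf hc hr hrR
    (K2 hn hr hrR (p := 2 * (1 - s)) (by linarith))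
  set A := ∫ t in Set.Ioi 0, t ^ n * ‖f t‖ ^ 2
  set B := ∫ t in Set.Ioi 0, t ^ n * ‖deriv f t‖ ^ 2
  have hp : 0 < 2 * (1 - s) := by linarith
  by_cases hAB : A * B = 0
  · have := l1 hr
    rw [hAB, mul_zero] at this
    have h0 : r ^ n * ‖f r‖ ^ 2 = 0 := by
      have := le_antisymm this (sq_nonneg _)
      simpa using this
    have h1 : ‖f r‖ = 0 := by
      rcases mul_eq_zero.1 h0 with h | h
      · exact absurd h (by positivity)
      · simpa using h
    rw [h1, mul_zero]
    positivity
  have hA' : 0 < A := lt_of_le_of_ne hA fun h => hAB (by rw [← h, zero_mul])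
  have hB' : 0 < B := lt_of_le_of_ne hB fun h => hAB (by rw [← h, mul_zero])
  obtain ⟨L, hL, hAL⟩ : ∃ L > 0, A = L ^ 2 * B := by
    refine ⟨√(A / B), by positivity, ?_⟩
    rw [Real.sq_sqrt (by positivity)]; field_simp
  set D := A ^ ((1 - s) / 2) * B ^ (s / 2) with hD
  have hD0 : 0 ≤ D := by positivity
  have hD2 : D ^ 2 = L ^ (2 * (1 - s)) * B := by
    rw [hD, mul_pow, ← Real.rpow_natCast, ← Real.rpow_natCast, ← Real.rpow_mul hA, ← Real.rpow_mul hB,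
      hAL, Real.mul_rpow (by positivity) hB, ← Real.rpow_natCast, ← Real.rpow_mul hL.le, mul_assoc,
      ← Real.rpow_add hB']
    push_cast
    have e1 : (2 : ℝ) * ((1 - s) / 2 * 2) = 2 * (1 - s) := by ring
    have e2 : (1 - s) / 2 * 2 + s / 2 * 2 = (1 : ℝ) := by ring
    rw [e1, e2, Real.rpow_one]
  have esq : ∀ ρ : ℝ, 0 < ρ → (ρ ^ (((n : ℝ) + 1 - 2 * s) / 2)) ^ 2 = ρ ^ n * ρ ^ (1 - 2 * s) := by
    intro ρ hρ
    rw [← Real.rpow_natCast, ← Real.rpow_mul hρ.le, ← Real.rpow_natCast, ← Real.rpow_add hρ]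
    congr 1
    push_cast; ring
  have c1 : ∀ ρ, L ≤ ρ → ρ ^ (((n : ℝ) + 1 - 2 * s) / 2) * ‖f ρ‖ ≤ √2 * D := by
    intro ρ hρ
    have hρ0 : 0 < ρ := hL.trans_le hρ
    have h1 : ρ ^ n * ‖f ρ‖ ^ 2 ≤ 2 * L * B := by
      apply sqle _ (by positivity)
      refine (l1 hρ0).trans_eq ?_
      rw [hAL]; ring
    have h2 : ρ ^ (1 - 2 * s) ≤ L ^ (1 - 2 * s) :=
      Real.rpow_le_rpow_of_nonpos hL hρ (by linarith)
    apply sqle _ (by positivity)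
    rw [mul_pow, mul_pow, esq ρ hρ0, hD2, Real.sq_sqrt (by norm_num)]
    calc ρ ^ n * ρ ^ (1 - 2 * s) * ‖f ρ‖ ^ 2 = ρ ^ (1 - 2 * s) * (ρ ^ n * ‖f ρ‖ ^ 2) := by ring
      _ ≤ L ^ (1 - 2 * s) * (2 * L * B) := by gcongr
      _ = 2 * (L ^ (1 - 2 * s) * L * B) := by ring
      _ = _ := by
        rw [← Real.rpow_add_one hL.ne']
        congr 3; ring
  rcases le_or_gt L r with hLr | hLr
  · refine (c1 r hLr).trans ?_
    gcongr
    linarith [Real.sqrt_nonneg (1 / (2 * (1 - s)))]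
  have c2 : r ^ (((n : ℝ) + 1 - 2 * s) / 2) * ‖f L - f r‖ ≤ √(1 / (2 * (1 - s))) * D := by
    apply sqle _ (by positivity)
    rw [mul_pow, mul_pow, esq r hr, hD2, Real.sq_sqrt (by positivity)]
    calc _ ≤ r ^ n * r ^ (1 - 2 * s) * (B * (r * (r ^ n)⁻¹ * ((L / r) ^ (2 * (1 - s)) / (2 * (1 - s))))) := by
          gcongr; exact l2 hLr.le
      _ = (r ^ (1 - 2 * s) * r) * (L / r) ^ (2 * (1 - s)) * B * (1 / (2 * (1 - s))) := by
          field_simp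
      _ = _ := by
          rw [← Real.rpow_add_one hr.ne', Real.div_rpow hL.le hr.le]
          have : 1 - 2 * s + 1 = 2 * (1 - s) := by ring
          rw [this]
          field_simp
  have c3 : r ^ (((n : ℝ) + 1 - 2 * s) / 2) * ‖f L‖ ≤ √2 * D := by
    refine le_trans ?_ (c1 L le_rfl)
    gcongr
    have : (1 : ℝ) ≤ n := by exact_mod_cast hn
    linarith
  have : ‖f r‖ ≤ ‖f L‖ + ‖f L - f r‖ := by
    have := norm_sub_le (f L) (f L - f r)
    simpa using this
  calc _ ≤ r ^ (((n : ℝ) + 1 - 2 * s) / 2) * (‖f L‖ + ‖f L - f r‖) := by gcongr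
    _ ≤ _ := by linarith

lemma gradSq_ge {N : ℕ} (u : EuclideanSpace ℝ (Fin N) → ℂ) (x v : EuclideanSpace ℝ (Fin N))
    (hv : ‖v‖ = 1) : ‖fderiv ℝ u x v‖ ^ 2 ≤ gradSq u x := by
  have hv' : v = ∑ i, v i • EuclideanSpace.single i (1 : ℝ) := by
    ext j
    simp [Finset.sum_apply, Pi.single_apply]
  have h1 : ‖fderiv ℝ u x v‖ ≤ ∑ i, |v i| * ‖fderiv ℝ u x (EuclideanSpace.single i 1)‖ := by
    conv_lhs => rw [hv']
    rw [map_sum]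
    refine (norm_sum_le _ _).trans_eq ?_
    simp [norm_smul]
  have h2 := Finset.sum_mul_sq_le_sq_mul_sq Finset.univ (fun i => |v i|)
    (fun i => ‖fderiv ℝ u x (EuclideanSpace.single i 1)‖)
  have h3 : ∑ i, |v i| ^ 2 = 1 := by
    have := EuclideanSpace.norm_sq_eq v
    rw [hv] at this
    simpa using this.symm
  rw [h3, one_mul] at h2
  exact (pow_le_pow_left₀ (norm_nonneg _) h1 2).trans h2

/-- Radial Sobolev (Strauss) inequality:
`|x|^{(N−2s)/2} |u(x)| ≤ C ‖u‖_{L²}^{1−s} ‖∇u‖_{L²}^{s}` for radial `u`. -/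
theorem radial_sobolev_strauss (N : ℕ) (s : ℝ)
    (h : (2 ≤ N ∧ 1 / 2 ≤ s ∧ s < 1) ∨ (3 ≤ N ∧ s = 1)) :
    ∃ C > 0, ∀ u : EuclideanSpace ℝ (Fin N) → ℂ,
      ContDiff ℝ (⊤ : ℕ∞) u → HasCompactSupport u →
      (∀ x y : EuclideanSpace ℝ (Fin N), ‖x‖ = ‖y‖ → u x = u y) →
      ∀ x : EuclideanSpace ℝ (Fin N), x ≠ 0 →
      ‖x‖ ^ (((N : ℝ) - 2 * s) / 2) * ‖u x‖ ≤
        C * (∫ z, ‖u z‖ ^ 2) ^ ((1 - s) / 2) * (∫ z, gradSq u z) ^ (s / 2) := by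
  obtain ⟨n, rfl⟩ : ∃ n, N = n + 1 := ⟨N - 1, by omega⟩
  have hs0 : 0 ≤ s ∧ s ≤ 1 := by
    rcases h with h | h
    · constructor <;> linarith [h.2.1, h.2.2]
    · rw [h.2]; norm_num
  have hcore : ∃ C > 0, ∀ f : ℝ → ℂ, ContDiff ℝ 1 f → HasCompactSupport f → ∀ r > 0,
      r ^ (((n : ℝ) + 1 - 2 * s) / 2) * ‖f r‖ ≤ C *
      ((∫ t in Set.Ioi 0, t ^ n * ‖f t‖ ^ 2) ^ ((1 - s) / 2) *
      (∫ t in Set.Ioi 0, t ^ n * ‖deriv f t‖ ^ 2) ^ (s / 2)) := by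
    rcases h with ⟨h1, h2, h3⟩ | ⟨h1, rfl⟩
    · exact ⟨√2 + √(1 / (2 * (1 - s))), by positivity, core2 n (by omega) s h2 h3⟩
    · refine ⟨1, one_pos, fun f hf hc r hr => ?_⟩
      simpa using core1 n (by omega) f hf hc r hr
  obtain ⟨C, hC, hcore⟩ := hcore
  set c : ℝ := (n + 1 : ℝ) * (volume : Measure (EuclideanSpace ℝ (Fin (n + 1)))).real
    (Metric.ball 0 1) with hc
  have hc0 : 0 < c := by
    have : 0 < (volume : Measure (EuclideanSpace ℝ (Fin (n + 1)))).real (Metric.ball 0 1) :=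
      ENNReal.toReal_pos (Metric.measure_ball_pos _ _ one_pos).ne' measure_ball_lt_top.ne
    positivity
  have polar : ∀ g : ℝ → ℝ, ∫ x : EuclideanSpace ℝ (Fin (n + 1)), g ‖x‖ =
      c * ∫ t in Set.Ioi 0, t ^ n * g t := by
    intro g
    rw [integral_fun_norm_addHaar, hc]
    simp [mul_assoc]
  refine ⟨C / √c, by positivity, ?_⟩
  intro u hu hcu hrad x hx
  set e : EuclideanSpace ℝ (Fin (n + 1)) := EuclideanSpace.single 0 1 with he
  have hen : ‖e‖ = 1 := by simp [he]
  set f : ℝ → ℂ := fun t => u (t • e) with hfdef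
  have hu1 : ContDiff ℝ 1 u := hu.of_le (by exact_mod_cast le_top)
  have hf : ContDiff ℝ 1 f := hu1.comp (by fun_prop)
  have hfc : HasCompactSupport f := by
    apply hcu.comp_isClosedEmbedding
    exact (LinearMap.toSpanSingleton ℝ _ e).isClosedEmbedding_of_injective (by
      rw [LinearMap.ker_toSpanSingleton]
      intro h0; rw [h0] at hen; simp at hen)
  have hf' : Continuous (deriv f) := hf.continuous_deriv le_rfl
  have huf : ∀ z, u z = f ‖z‖ := fun z => hrad _ _ (by simp [norm_smul, hen])
  have hder : ∀ z, ‖deriv f ‖z‖‖ ^ 2 ≤ gradSq u z := by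
    intro z
    obtain ⟨v, hv, hzv⟩ : ∃ v : EuclideanSpace ℝ (Fin (n + 1)), ‖v‖ = 1 ∧ z = ‖z‖ • v := by
      by_cases hz : z = 0
      · exact ⟨e, hen, by simp [hz]⟩
      · have : ‖z‖ ≠ 0 := norm_ne_zero_iff.2 hz
        exact ⟨‖z‖⁻¹ • z, by simp [norm_smul, this], by rw [smul_smul, mul_inv_cancel₀ this, one_smul]⟩
    have hfv : f = fun t : ℝ => u (t • v) := by
      funext t; exact hrad _ _ (by simp [norm_smul, hen, hv])
    have hd : HasDerivAt f (fderiv ℝ u z v) ‖z‖ := by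
      rw [hfv]
      have h1 : HasDerivAt (fun t : ℝ => t • v) v ‖z‖ := by
        simpa using (hasDerivAt_id ‖z‖).smul_const v
      have h2 : HasFDerivAt u (fderiv ℝ u z) (‖z‖ • v) := by
        rw [← hzv]; exact (hu1.differentiable one_ne_zero z).hasFDerivAt
      exact h2.comp_hasDerivAt _ h1
    rw [hd.deriv]
    exact gradSq_ge u z v hv
  have hgi : Integrable (gradSq u) := by
    have hdc : Continuous (fderiv ℝ u) := hu1.continuous_fderiv one_ne_zero
    apply Continuous.integrable_of_hasCompactSupport
    · unfold gradSq; fun_prop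
    · apply (hcu.fderiv ℝ).mono
      intro z hz hz0
      apply hz
      simp [gradSq, hz0]
  have hAe : ∫ z, ‖u z‖ ^ 2 = c * ∫ t in Set.Ioi 0, t ^ n * ‖f t‖ ^ 2 := by
    rw [← polar (fun t => ‖f t‖ ^ 2)]
    simp_rw [huf]
  have hBe : c * (∫ t in Set.Ioi 0, t ^ n * ‖deriv f t‖ ^ 2) ≤ ∫ z, gradSq u z := by
    rw [← polar (fun t => ‖deriv f t‖ ^ 2)]
    apply integral_mono_of_nonneg (Filter.Eventually.of_forall fun _ => by positivity) hgi
    exact Filter.Eventually.of_forall hder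
  have hA : 0 ≤ ∫ t in Set.Ioi 0, t ^ n * ‖f t‖ ^ 2 :=
    setIntegral_nonneg measurableSet_Ioi fun t (ht : 0 < t) => by positivity
  have hB : 0 ≤ ∫ t in Set.Ioi 0, t ^ n * ‖deriv f t‖ ^ 2 :=
    setIntegral_nonneg measurableSet_Ioi fun t (ht : 0 < t) => by positivity
  have hfin := hcore f hf hfc ‖x‖ (norm_pos_iff.2 hx)
  rw [← huf] at hfin
  push_cast
  refine hfin.trans ?_
  rw [hAe]
  set A := ∫ t in Set.Ioi 0, t ^ n * ‖f t‖ ^ 2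
  set B := ∫ t in Set.Ioi 0, t ^ n * ‖deriv f t‖ ^ 2
  calc C * (A ^ ((1 - s) / 2) * B ^ (s / 2))
      = C / √c * (c * A) ^ ((1 - s) / 2) * (c * B) ^ (s / 2) := by
        rw [Real.mul_rpow hc0.le hA, Real.mul_rpow hc0.le hB]
        have : c ^ ((1 - s) / 2) * c ^ (s / 2) = √c := by
          rw [← Real.rpow_add hc0, Real.sqrt_eq_rpow]; congr 1; ring
        have h2 : √c ≠ 0 := by positivity
        calc _ = C / √c * √c * (A ^ ((1 - s) / 2) * B ^ (s / 2)) := by field_simp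
          _ = C / √c * (c ^ ((1 - s) / 2) * c ^ (s / 2)) * (A ^ ((1 - s) / 2) * B ^ (s / 2)) := by
              rw [this]
          _ = _ := by ring
    _ ≤ _ := by
        gcongr
        linarith [hs0.1]
end

section
/- Let N ≥ 3, α ∈ ((N−4)₊, N) and 2 ≤ p < (N+α)/(N−2). For every M > 0 there exists C > 0 such that for all smooth compactly supported u, v, φ : ℝ^N → ℂ with ‖u‖_{H¹} ≤ M and ‖v‖_{H¹} ≤ M, | ∫_{ℝ^N} [ (I_α ∗ |u|^p)(x) |u(x)|^{p−2} u(x) − (I_α ∗ |v|^p)(x) |v(x)|^{p−2} v(x) ] · conj(φ(x)) dx | ≤ C ‖u − v‖_{H¹} ‖φ‖_{H¹}. -/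
open MeasureTheory Real
open scoped BigOperators

/-- The normalization constant `𝒜 = Γ((N−α)/2) / (Γ(α/2) π^{N/2} 2^α)` of
the Riesz potential `I_α(x) = 𝒜 |x|^{α−N}`. -/
noncomputable def rieszConst (N : ℕ) (α : ℝ) : ℝ :=
  Real.Gamma (((N : ℝ) - α) / 2) /
    (Real.Gamma (α / 2) * Real.pi ^ ((N : ℝ) / 2) * 2 ^ α)

/-- The Riesz convolution `(I_α ∗ |u|^p)(x) = ∫ I_α(x−y) |u(y)|^p dy`. -/
noncomputable def rieszConv (N : ℕ) (α p : ℝ) (u : EuclideanSpace ℝ (Fin N) → ℂ)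
    (x : EuclideanSpace ℝ (Fin N)) : ℝ :=
  ∫ y, rieszConst N α * ‖x - y‖ ^ (α - (N : ℝ)) * ‖u y‖ ^ p

/-- The Choquard nonlocal term `∫ (I_α ∗ |u|^p)(x) |u(x)|^p dx`. -/
noncomputable def choquardTerm (N : ℕ) (α p : ℝ)
    (u : EuclideanSpace ℝ (Fin N) → ℂ) : ℝ :=
  ∫ x, rieszConv N α p u x * ‖u x‖ ^ p

/-- The `H¹` norm `(∫ (|u|² + |∇u|²))^{1/2}`. -/
noncomputable def H1Norm {N : ℕ} (u : EuclideanSpace ℝ (Fin N) → ℂ) : ℝ :=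
  Real.sqrt (∫ x, (‖u x‖ ^ 2 + gradSq u x))

open scoped ENNReal NNReal

noncomputable def chLq {N : ℕ} (q : ℝ) (f : EuclideanSpace ℝ (Fin N) → ℝ≥0∞) : ℝ≥0∞ :=
  (∫⁻ x, f x ^ q) ^ (1 / q)

lemma ch_rpow_sub {a b p : ℝ} (hb : 0 ≤ b) (hab : b ≤ a) (hp : 1 ≤ p) :
    a ^ p - b ^ p ≤ p * (a ^ (p - 1) * (a - b)) := by
  rcases eq_or_lt_of_le (hb.trans hab) with h | ha
  · have hb0 : b = 0 := le_antisymm (h ▸ hab) hb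
    subst hb0; rw [← h]; simp
  have h1 := one_add_mul_self_le_rpow_one_add (s := b / a - 1) (p := p)
    (by have := div_nonneg hb ha.le; linarith) hp
  have h2 : (1 + (b / a - 1)) = b / a := by ring
  rw [h2, Real.div_rpow hb ha.le, le_div_iff₀ (by positivity)] at h1
  have h3 : a ^ p = a ^ (p - 1) * a := by
    rw [Real.rpow_sub_one ha.ne']; field_simp
  have h4 : (1 + p * (b / a - 1)) * a ^ p = a ^ p - p * (a ^ (p - 1) * (a - b)) := by
    rw [h3]; field_simp; ring
  linarith

lemma ch_pow_diff (u v : ℂ) {p : ℝ} (hp : 1 ≤ p) :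
    |‖u‖ ^ p - ‖v‖ ^ p| ≤ p * ((‖u‖ + ‖v‖) ^ (p - 1) * ‖u - v‖) := by
  wlog h : ‖v‖ ≤ ‖u‖ generalizing u v
  · have := this v u (le_of_not_ge h)
    rwa [abs_sub_comm, add_comm, norm_sub_rev] at this
  have h1 := ch_rpow_sub (norm_nonneg v) h hp
  have h2 : ‖v‖ ^ p ≤ ‖u‖ ^ p := Real.rpow_le_rpow (norm_nonneg _) h (by linarith)
  rw [abs_of_nonneg (by linarith)]
  refine h1.trans ?_
  have h3 : ‖u‖ ^ (p - 1) ≤ (‖u‖ + ‖v‖) ^ (p - 1) :=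
    Real.rpow_le_rpow (norm_nonneg _) (by linarith [norm_nonneg v]) (by linarith)
  have h4 := norm_sub_norm_le u v
  gcongr

lemma ch_vec_diff (u v : ℂ) {p : ℝ} (hp : 2 ≤ p) :
    ‖(‖u‖ ^ (p - 2) : ℝ) • u - (‖v‖ ^ (p - 2) : ℝ) • v‖
      ≤ p * ((‖u‖ + ‖v‖) ^ (p - 2) * ‖u - v‖) := by
  wlog h : ‖v‖ ≤ ‖u‖ generalizing u v
  · have := this v u (le_of_not_ge h)
    rwa [norm_sub_rev, add_comm, norm_sub_rev v u] at this
  have e : (‖u‖ ^ (p - 2) : ℝ) • u - (‖v‖ ^ (p - 2) : ℝ) • v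
      = (‖u‖ ^ (p - 2) : ℝ) • (u - v) + (‖u‖ ^ (p - 2) - ‖v‖ ^ (p - 2) : ℝ) • v := by
    rw [smul_sub, sub_smul]; abel
  have h2 : ‖v‖ ^ (p - 2) ≤ ‖u‖ ^ (p - 2) :=
    Real.rpow_le_rpow (norm_nonneg _) h (by linarith)
  have h3 : ‖u‖ ^ (p - 2) ≤ (‖u‖ + ‖v‖) ^ (p - 2) :=
    Real.rpow_le_rpow (norm_nonneg _) (by linarith [norm_nonneg v]) (by linarith)
  have h4 := norm_sub_norm_le u v
  have h5 := ch_rpow_sub (norm_nonneg v) h (p := p - 1) (by linarith)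
  have h6 : ∀ z : ℂ, ‖z‖ ^ (p - 1) = ‖z‖ ^ (p - 2) * ‖z‖ := by
    intro z
    rw [show p - 1 = (p - 2) + 1 by ring,
      Real.rpow_add_of_nonneg (norm_nonneg _) (by linarith) (by norm_num), Real.rpow_one]
  have hu0 : 0 ≤ ‖u‖ ^ (p - 2) := Real.rpow_nonneg (norm_nonneg _) _
  have h7 : (‖u‖ ^ (p - 2) - ‖v‖ ^ (p - 2)) * ‖v‖ ≤ (p - 1) * (‖u‖ ^ (p - 2) * ‖u - v‖) := by
    rw [h6, h6, show p - 1 - 1 = p - 2 by ring] at h5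
    have : ‖u‖ ^ (p - 2) * ‖v‖ ≤ ‖u‖ ^ (p - 2) * ‖u‖ := by gcongr
    have h8 : (p - 1) * (‖u‖ ^ (p - 2) * (‖u‖ - ‖v‖)) ≤
        (p - 1) * (‖u‖ ^ (p - 2) * ‖u - v‖) := by
      have : 0 ≤ p - 1 := by linarith
      gcongr
    nlinarith
  calc _ ≤ ‖u‖ ^ (p - 2) * ‖u - v‖ + (‖u‖ ^ (p - 2) - ‖v‖ ^ (p - 2)) * ‖v‖ := by
        rw [e]
        refine (norm_add_le _ _).trans ?_
        rw [norm_smul, norm_smul, Real.norm_of_nonneg hu0, Real.norm_of_nonneg (by linarith)]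
    _ ≤ p * (‖u‖ ^ (p - 2) * ‖u - v‖) := by linarith
    _ ≤ _ := by gcongr

lemma ch_holder3 {N : ℕ} {p a : ℝ} (hp : 2 ≤ p) (ha : 1 ≤ a)
    {w d g : EuclideanSpace ℝ (Fin N) → ℝ≥0∞} (hw : Measurable w) (hd : Measurable d)
    (hg : Measurable g) :
    chLq a (fun x => w x ^ (p - 2) * d x * g x) ≤
      chLq (p * a) w ^ (p - 2) * chLq (p * a) d * chLq (p * a) g := by
  have hp0 : (0:ℝ) < p := by linarith
  have ha0 : (0:ℝ) < a := by linarith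
  have h := ENNReal.lintegral_prod_norm_pow_le (μ := volume) (Finset.univ : Finset (Fin 3))
    (f := ![fun x => w x ^ (p * a), fun x => d x ^ (p * a), fun x => g x ^ (p * a)])
    (p := ![(p - 2) / p, 1 / p, 1 / p]) (by
      intro i _; fin_cases i <;> simp <;> fun_prop)
    (by simp [Fin.sum_univ_three]; field_simp; ring)
    (by intro i _; fin_cases i <;> simp <;> positivity)
  simp only [Fin.prod_univ_three, Matrix.cons_val_zero, Matrix.cons_val_one, Matrix.cons_val] at h
  unfold chLq
  have q1 : p * a * ((p - 2) / p) = (p - 2) * a := by field_simp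
  have q2 : p * a * (1 / p) = a := by field_simp
  have q3 : (p - 2) / p * (1 / a) = 1 / (p * a) * (p - 2) := by field_simp
  have q4 : 1 / p * (1 / a) = 1 / (p * a) := by field_simp
  have e2 : ∀ x, (w x ^ (p - 2) * d x * g x) ^ a =
      (w x ^ (p * a)) ^ ((p - 2) / p) * (d x ^ (p * a)) ^ (1 / p) * (g x ^ (p * a)) ^ (1 / p) := by
    intro x
    rw [ENNReal.mul_rpow_of_nonneg _ _ ha0.le, ENNReal.mul_rpow_of_nonneg _ _ ha0.le,
      ← ENNReal.rpow_mul, ← ENNReal.rpow_mul, ← ENNReal.rpow_mul, ← ENNReal.rpow_mul]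
    rw [q1, q2]
  simp_rw [e2]
  refine (ENNReal.rpow_le_rpow h (by positivity)).trans (le_of_eq ?_)
  rw [ENNReal.mul_rpow_of_nonneg _ _ (by positivity),
    ENNReal.mul_rpow_of_nonneg _ _ (by positivity), ← ENNReal.rpow_mul, ← ENNReal.rpow_mul,
    ← ENNReal.rpow_mul, ← ENNReal.rpow_mul]
  rw [q3, q4]

lemma ch_young {N : ℕ} {s t b a : ℝ} (hs : 1 ≤ s) (ht : t = 1 - 1 / s) (hb : b = 1 / (2 * s))
    (ha : a = 1 / (1 - b)) {k f g : EuclideanSpace ℝ (Fin N) → ℝ≥0∞}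
    (hk : Measurable k) (hf : Measurable f) (hg : Measurable g) :
    ∫⁻ x, ∫⁻ y, k (x - y) * f x * g y ≤
      (∫⁻ x, k x ^ s) ^ (1 / s) * (chLq a f * chLq a g) := by
  have hs0 : 0 < s := by linarith
  have ht0 : 0 ≤ t := by rw [ht, sub_nonneg, div_le_one hs0]; exact hs
  have hb0 : 0 < b := by rw [hb]; positivity
  have htb : t + 2 * b = 1 := by rw [ht, hb]; field_simp; ring
  have hb1 : 1 - b = t + b := by linarith
  have htb0 : 0 < t + b := by linarith
  have ha0 : 0 < a := by rw [ha, hb1]; positivity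
  have hatb : a * (t + b) = 1 := by rw [ha, hb1]; field_simp
  have hsb : s * (2 * b) = 1 := by rw [hb]; field_simp
  have hsplit : ∀ z : ℝ≥0∞, z ^ (t + b) = z ^ t * z ^ b := fun z =>
    ENNReal.rpow_add_of_nonneg _ _ ht0 hb0.le
  have hsplit2 : ∀ z : ℝ≥0∞, z ^ (2 * b) = z ^ b * z ^ b := fun z => by
    rw [two_mul]; exact ENNReal.rpow_add_of_nonneg _ _ hb0.le hb0.le
  have h := ENNReal.lintegral_prod_norm_pow_le
    (μ := (volume : Measure (EuclideanSpace ℝ (Fin N))).prod volume)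
    (Finset.univ : Finset (Fin 3))
    (f := ![fun z => f z.1 ^ a * g z.2 ^ a, fun z => f z.1 ^ a * k (z.1 - z.2) ^ s,
      fun z => k (z.1 - z.2) ^ s * g z.2 ^ a])
    (p := ![t, b, b]) (by
      intro i _; fin_cases i <;> simp <;> fun_prop)
    (by simp [Fin.sum_univ_three]; linarith)
    (by intro i _; fin_cases i <;> simp <;> linarith)
  simp only [Fin.prod_univ_three, Matrix.cons_val_zero, Matrix.cons_val_one, Matrix.cons_val] at h
  have i1 : ∫⁻ z, f z.1 ^ a * g z.2 ^ a
      ∂((volume : Measure (EuclideanSpace ℝ (Fin N))).prod volume) =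
      (∫⁻ x, f x ^ a) * ∫⁻ x, g x ^ a :=
    lintegral_prod_mul (f := fun x => f x ^ a) (g := fun x => g x ^ a)
      (by fun_prop) (by fun_prop)
  have i2 : ∫⁻ z, f z.1 ^ a * k (z.1 - z.2) ^ s
      ∂((volume : Measure (EuclideanSpace ℝ (Fin N))).prod volume) =
      (∫⁻ x, f x ^ a) * ∫⁻ x, k x ^ s := by
    rw [lintegral_prod _ (by fun_prop)]
    simp only
    rw [← lintegral_mul_const _ (by fun_prop)]
    congr 1; ext x
    rw [lintegral_const_mul _ (by fun_prop)]
    congr 1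
    exact lintegral_sub_left_eq_self (fun y => k y ^ s) x
  have i3 : ∫⁻ z, k (z.1 - z.2) ^ s * g z.2 ^ a
      ∂((volume : Measure (EuclideanSpace ℝ (Fin N))).prod volume) =
      (∫⁻ x, k x ^ s) * ∫⁻ x, g x ^ a := by
    rw [lintegral_prod_symm _ (by fun_prop)]
    simp only
    rw [← lintegral_const_mul _ (by fun_prop)]
    congr 1; ext y
    rw [lintegral_mul_const _ (by fun_prop)]
    congr 1
    exact lintegral_sub_right_eq_self (fun x => k x ^ s) y
  rw [i1, i2, i3] at h
  have e : ∀ x y, k (x - y) * f x * g y =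
      (f x ^ a * g y ^ a) ^ t * (f x ^ a * k (x - y) ^ s) ^ b * (k (x - y) ^ s * g y ^ a) ^ b := by
    intro x y
    rw [ENNReal.mul_rpow_of_nonneg _ _ ht0, ENNReal.mul_rpow_of_nonneg _ _ hb0.le,
      ENNReal.mul_rpow_of_nonneg _ _ hb0.le]
    have h1 : k (x - y) = (k (x - y) ^ s) ^ b * (k (x - y) ^ s) ^ b := by
      rw [← hsplit2, ← ENNReal.rpow_mul, hsb, ENNReal.rpow_one]
    have h2 : f x = (f x ^ a) ^ t * (f x ^ a) ^ b := by
      rw [← hsplit, ← ENNReal.rpow_mul, hatb, ENNReal.rpow_one]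
    have h3 : g y = (g y ^ a) ^ t * (g y ^ a) ^ b := by
      rw [← hsplit, ← ENNReal.rpow_mul, hatb, ENNReal.rpow_one]
    conv_lhs => rw [h1, h2, h3]
    ring
  have hl : ∫⁻ x, ∫⁻ y, k (x - y) * f x * g y =
      ∫⁻ z, (f z.1 ^ a * g z.2 ^ a) ^ t * (f z.1 ^ a * k (z.1 - z.2) ^ s) ^ b *
        (k (z.1 - z.2) ^ s * g z.2 ^ a) ^ b
        ∂((volume : Measure (EuclideanSpace ℝ (Fin N))).prod volume) := by
    rw [lintegral_prod _ (by fun_prop)]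
    simp_rw [e]
  rw [hl]
  refine h.trans (le_of_eq ?_)
  unfold chLq
  have hs' : 1 / s = 2 * b := by rw [hb]; field_simp
  have ha' : 1 / a = t + b := by rw [ha, hb1]; simp
  rw [hs', ha', hsplit, hsplit, hsplit2, ENNReal.mul_rpow_of_nonneg _ _ ht0,
    ENNReal.mul_rpow_of_nonneg _ _ hb0.le, ENNReal.mul_rpow_of_nonneg _ _ hb0.le]
  ring

noncomputable def chK (N : ℕ) (α : ℝ) (x : EuclideanSpace ℝ (Fin N)) : ℝ≥0∞ :=
  ENNReal.ofReal (‖x‖ ^ (α - (N : ℝ)))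

noncomputable def chK1 (N : ℕ) (α : ℝ) : EuclideanSpace ℝ (Fin N) → ℝ≥0∞ :=
  (Metric.ball 0 1).indicator (chK N α)

lemma chK_meas (N : ℕ) (α : ℝ) : Measurable (chK N α) := by
  unfold chK; fun_prop

lemma chK1_meas (N : ℕ) (α : ℝ) : Measurable (chK1 N α) :=
  (chK_meas N α).indicator measurableSet_ball

lemma chK_le (N : ℕ) (α : ℝ) (hα : α < N) (x : EuclideanSpace ℝ (Fin N)) :
    chK N α x ≤ chK1 N α x + 1 := by
  unfold chK1
  by_cases hx : x ∈ Metric.ball (0 : EuclideanSpace ℝ (Fin N)) 1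
  · rw [Set.indicator_of_mem hx]; exact le_self_add
  · rw [Set.indicator_of_notMem hx, zero_add]
    simp only [mem_ball_zero_iff, not_lt] at hx
    unfold chK
    rw [← ENNReal.ofReal_one]
    exact ENNReal.ofReal_le_ofReal (Real.rpow_le_one_of_one_le_of_nonpos hx (by linarith))

lemma chK1_int (N : ℕ) (hN : 3 ≤ N) (α s : ℝ) (hs : 1 ≤ s) (hsN : s * (N - α) < N) :
    ∫⁻ x, chK1 N α x ^ s ≠ ⊤ := by
  have hs0 : 0 < s := by linarith
  have h := integrableOn_ball_of_norm_le_rpow (E := EuclideanSpace ℝ (Fin N)) (μ := volume)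
    (f := fun x => ‖x‖ ^ (-(s * (N - α)))) (C := 1) (α := s * (N - α)) (r := 1)
    (by simp; omega) (by simpa using hsN)
    (Filter.Eventually.of_forall fun x => by
      rw [one_mul, Real.norm_of_nonneg (Real.rpow_nonneg (norm_nonneg _) _)])
    (by apply Measurable.aestronglyMeasurable; fun_prop)
  have h2 := h.lintegral_lt_top
  rw [← lintegral_indicator measurableSet_ball] at h2
  refine ne_of_lt (lt_of_le_of_lt (le_of_eq ?_) h2)
  congr 1; ext x
  unfold chK1
  by_cases hx : x ∈ Metric.ball (0 : EuclideanSpace ℝ (Fin N)) 1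
  · rw [Set.indicator_of_mem hx, Set.indicator_of_mem hx]
    unfold chK
    rw [ENNReal.ofReal_rpow_of_nonneg (Real.rpow_nonneg (norm_nonneg _) _) hs0.le,
      ← Real.rpow_mul (norm_nonneg _)]
    congr 2; ring
  · rw [Set.indicator_of_notMem hx, Set.indicator_of_notMem hx, ENNReal.zero_rpow_of_pos hs0]

lemma ch_bil (N : ℕ) (hN : 3 ≤ N) (α p : ℝ) (hα0 : 0 < α) (hαN : α < N)
    (hp2 : p < ((N : ℝ) + α) / ((N : ℝ) - 2)) :
    ∃ C : ℝ≥0∞, C ≠ ⊤ ∧ ∃ a : ℝ, 1 ≤ a ∧ p * a ≤ 2 * N / (N - 2) ∧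
      ∀ f g : EuclideanSpace ℝ (Fin N) → ℝ≥0∞, Measurable f → Measurable g →
        ∫⁻ x, ∫⁻ y, chK N α (x - y) * f x * g y ≤
          C * (chLq a f * chLq a g) + chLq 1 f * chLq 1 g := by
  have hN3 : (3:ℝ) ≤ N := by exact_mod_cast hN
  have hN2 : (0:ℝ) < N - 2 := by linarith
  rw [lt_div_iff₀ hN2] at hp2
  have hD : (N:ℝ) - α < 2 * N - p * (N - 2) := by linarith
  have hD0 : 0 < 2 * (N:ℝ) - p * (N - 2) := by linarith
  obtain ⟨s, hs⟩ : ∃ s, s = max 1 (N / (2 * (N:ℝ) - p * (N - 2))) := ⟨_, rfl⟩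
  have hs1 : 1 ≤ s := hs ▸ le_max_left _ _
  have hs0 : 0 < s := by linarith
  have hs2 : (N:ℝ) ≤ s * (2 * N - p * (N - 2)) := by
    rw [← div_le_iff₀ hD0, hs]; exact le_max_right _ _
  have hs3 : s * (N - α) < N := by
    rcases max_choice 1 (N / (2 * (N:ℝ) - p * (N - 2))) with h | h
    · rw [hs, h]; linarith
    · rw [hs, h, div_mul_eq_mul_div, div_lt_iff₀ hD0]
      gcongr
  refine ⟨(∫⁻ x, chK1 N α x ^ s) ^ (1 / s), ?_, 1 / (1 - 1 / (2 * s)), ?_, ?_, ?_⟩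
  · exact ENNReal.rpow_ne_top_of_nonneg (by positivity) (chK1_int N hN α s hs1 hs3)
  · have : 1 / (2 * s) ≤ 1 / 2 := by
      apply one_div_le_one_div_of_le <;> linarith
    have h0 : 0 < 1 / (2 * s) := by positivity
    rw [le_div_iff₀ (by linarith)]; linarith
  · have e : 1 - 1 / (2 * s) = (2 * s - 1) / (2 * s) := by field_simp
    have : 0 < 2 * s - 1 := by linarith
    rw [e, one_div_div, mul_div_assoc', div_le_div_iff₀ this hN2]
    nlinarith
  · intro f g hf hg
    have hk := chK_meas N α
    have hk1 := chK1_meas N α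
    calc ∫⁻ x, ∫⁻ y, chK N α (x - y) * f x * g y
        ≤ ∫⁻ x, ∫⁻ y, (chK1 N α (x - y) * f x * g y + f x * g y) := by
          refine lintegral_mono fun x => lintegral_mono fun y => ?_
          calc chK N α (x - y) * f x * g y ≤ (chK1 N α (x - y) + 1) * f x * g y := by
                gcongr; exact chK_le N α hαN _
            _ = _ := by ring
      _ = (∫⁻ x, ∫⁻ y, chK1 N α (x - y) * f x * g y) + (∫⁻ x, f x) * ∫⁻ y, g y := by
          have : ∀ x, ∫⁻ y, (chK1 N α (x - y) * f x * g y + f x * g y) =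
              (∫⁻ y, chK1 N α (x - y) * f x * g y) + f x * ∫⁻ y, g y := by
            intro x
            rw [lintegral_add_right _ (by fun_prop), lintegral_const_mul _ hg]
          simp_rw [this]
          rw [lintegral_add_right _ (by fun_prop), lintegral_mul_const _ hf]
      _ ≤ _ := by
          gcongr
          · exact ch_young hs1 rfl rfl rfl hk1 hf hg
          · simp [chLq]
          · simp [chLq]

lemma ch_opnorm {N : ℕ} (L : EuclideanSpace ℝ (Fin N) →L[ℝ] ℂ) :
    ‖L‖ ^ 2 ≤ ∑ i, ‖L (EuclideanSpace.single i 1)‖ ^ 2 := by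
  have h0 : 0 ≤ ∑ i, ‖L (EuclideanSpace.single i 1)‖ ^ 2 := by positivity
  rw [← Real.le_sqrt (norm_nonneg _) h0]
  refine L.opNorm_le_bound (Real.sqrt_nonneg _) fun x => ?_
  have hx : x = ∑ i, x i • EuclideanSpace.single i (1:ℝ) := by
    have := (EuclideanSpace.basisFun (Fin N) ℝ).sum_repr x
    simpa using this.symm
  have h1 : L x = ∑ i, x i • L (EuclideanSpace.single i (1:ℝ)) := by
    conv_lhs => rw [hx]
    simp
  rw [h1, EuclideanSpace.norm_eq, ← Real.sqrt_mul h0]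
  apply Real.le_sqrt_of_sq_le
  calc ‖∑ i, x i • L (EuclideanSpace.single i (1:ℝ))‖ ^ 2
      ≤ (∑ i, ‖L (EuclideanSpace.single i (1:ℝ))‖ * ‖x i‖) ^ 2 := by
        gcongr
        refine (norm_sum_le _ _).trans (le_of_eq ?_)
        congr 1; ext i; rw [norm_smul, mul_comm]
    _ ≤ _ := Finset.sum_mul_sq_le_sq_mul_sq _ _ _

lemma ch_H1 {N : ℕ} {u : EuclideanSpace ℝ (Fin N) → ℂ} (hu : ContDiff ℝ (⊤ : ℕ∞) u)
    (hc : HasCompactSupport u) :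
    ∫⁻ x, ‖u x‖ₑ ^ (2:ℝ) ≤ ENNReal.ofReal (H1Norm u) ^ (2:ℝ) ∧
    ∫⁻ x, ‖fderiv ℝ u x‖ₑ ^ (2:ℝ) ≤ ENNReal.ofReal (H1Norm u) ^ (2:ℝ) := by
  have hfd : Continuous (fderiv ℝ u) := hu.continuous_fderiv (by simp)
  have hg0 : ∀ x, 0 ≤ gradSq u x := fun x => by unfold gradSq; positivity
  have hcont : Continuous (fun x => ‖u x‖ ^ 2 + gradSq u x) := by
    unfold gradSq
    have := hu.continuous
    fun_prop
  have hcs : HasCompactSupport (fun x => ‖u x‖ ^ 2 + gradSq u x) := by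
    apply HasCompactSupport.add
    · exact hc.comp_left (g := fun z => ‖z‖ ^ 2) (by simp)
    · exact (hc.fderiv ℝ).comp_left
        (g := fun L : EuclideanSpace ℝ (Fin N) →L[ℝ] ℂ =>
          ∑ i, ‖L (EuclideanSpace.single i 1)‖ ^ 2) (by simp)
  have hint := hcont.integrable_of_hasCompactSupport (μ := volume) hcs
  have hA : ENNReal.ofReal (H1Norm u) ^ (2:ℝ) =
      ∫⁻ x, ENNReal.ofReal (‖u x‖ ^ 2 + gradSq u x) := by
    have h0 : 0 ≤ ∫ x, (‖u x‖ ^ 2 + gradSq u x) :=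
      integral_nonneg fun x => by have := hg0 x; positivity
    rw [← ofReal_integral_eq_lintegral_ofReal hint
      (Filter.Eventually.of_forall fun x => by have := hg0 x; positivity)]
    unfold H1Norm
    rw [ENNReal.ofReal_rpow_of_nonneg (Real.sqrt_nonneg _) (by norm_num)]
    congr 1
    rw [Real.rpow_two, Real.sq_sqrt h0]
  have key : ∀ {F : Type} [NormedAddCommGroup F] (z : F), ‖z‖ₑ ^ (2:ℝ) = ENNReal.ofReal (‖z‖ ^ 2) := by
    intro F _ z
    rw [← ofReal_norm, ENNReal.ofReal_rpow_of_nonneg (norm_nonneg _) (by norm_num), Real.rpow_two]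
  rw [hA]
  constructor
  · refine lintegral_mono fun x => ?_
    rw [key]
    exact ENNReal.ofReal_le_ofReal (by linarith [hg0 x])
  · refine lintegral_mono fun x => ?_
    rw [key]
    refine ENNReal.ofReal_le_ofReal ?_
    have := ch_opnorm (fderiv ℝ u x)
    unfold gradSq
    linarith [sq_nonneg ‖u x‖]

lemma ch_sobolev (N : ℕ) (hN : 3 ≤ N) : ∃ C : ℝ≥0∞, C ≠ ⊤ ∧ ∀ q : ℝ, 2 ≤ q →
    q ≤ 2 * N / (N - 2) → ∀ u : EuclideanSpace ℝ (Fin N) → ℂ,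
    ContDiff ℝ (⊤ : ℕ∞) u → HasCompactSupport u →
    chLq q (fun x => ‖u x‖ₑ) ≤ C * ENNReal.ofReal (H1Norm u) := by
  have hN3 : (3:ℝ) ≤ N := by exact_mod_cast hN
  have hN2 : (0:ℝ) < N - 2 := by linarith
  obtain ⟨r, hr⟩ : ∃ r : ℝ, r = 2 * N / (N - 2) := ⟨_, rfl⟩
  have hr2 : 2 < r := by rw [hr, lt_div_iff₀ hN2]; linarith
  let C0 : ℝ≥0 := eLpNormLESNormFDerivOfEqInnerConst
    (volume : Measure (EuclideanSpace ℝ (Fin N))) ((2 : ℝ≥0) : ℝ)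
  obtain ⟨B, hB⟩ : ∃ B : ℝ≥0∞, B = max 1 (C0 : ℝ≥0∞) := ⟨_, rfl⟩
  refine ⟨B, by simp [hB], ?_⟩
  rw [← hr]
  intro q hq2 hqr u hu hc
  obtain ⟨h1, h2⟩ := ch_H1 hu hc
  set A := ENNReal.ofReal (H1Norm u) with hAdef
  have hS := eLpNorm_le_eLpNorm_fderiv_of_eq_inner
    (volume : Measure (EuclideanSpace ℝ (Fin N))) (hu.of_le (by exact_mod_cast le_top)) hc
    (p := 2) (p' := r.toNNReal) (by norm_num) (by simp; omega) (by
      rw [Real.coe_toNNReal r (by linarith), hr]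
      simp
      field_simp)
  have hrr : ((r.toNNReal : ℝ≥0∞)).toReal = r := by simp; linarith
  rw [eLpNorm_eq_lintegral_rpow_enorm_toReal (by simp; linarith) (by simp),
    eLpNorm_eq_lintegral_rpow_enorm_toReal (by simp) (by simp), hrr] at hS
  have h3 : (∫⁻ x, ‖u x‖ₑ ^ r) ^ (1 / r) ≤ C0 * A := by
    refine hS.trans ?_
    gcongr
    simp only [ENNReal.coe_toReal, NNReal.coe_ofNat]
    rw [one_div, ENNReal.rpow_inv_le_iff (by norm_num)]
    exact h2
  have h4 : ∫⁻ x, ‖u x‖ₑ ^ r ≤ (B * A) ^ r := by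
    rw [one_div, ENNReal.rpow_inv_le_iff (by linarith)] at h3
    refine h3.trans ?_
    gcongr
    rw [hB]; exact le_max_right _ _
  have h5 : ∫⁻ x, ‖u x‖ₑ ^ (2:ℝ) ≤ (B * A) ^ (2:ℝ) := by
    refine h1.trans ?_
    gcongr
    calc A = 1 * A := by simp
      _ ≤ _ := by gcongr; rw [hB]; exact le_max_left _ _
  unfold chLq
  rw [one_div, ENNReal.rpow_inv_le_iff (by linarith)]
  obtain ⟨θ, hθ⟩ : ∃ θ, θ = (r - q) / (r - 2) := ⟨_, rfl⟩
  have hr20 : 0 < r - 2 := by linarith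
  have hθ0 : 0 ≤ θ := by rw [hθ]; apply div_nonneg <;> linarith
  have hθ1 : 0 ≤ 1 - θ := by rw [hθ, sub_nonneg, div_le_one hr20]; linarith
  have hq : 2 * θ + r * (1 - θ) = q := by rw [hθ]; field_simp; ring
  have hum : Measurable u := hu.continuous.measurable
  have hH := ENNReal.lintegral_mul_norm_pow_le (μ := volume) (f := fun x => ‖u x‖ₑ ^ (2:ℝ))
    (g := fun x => ‖u x‖ₑ ^ r) (by fun_prop) (by fun_prop) hθ0 hθ1 (by ring)
  have e : ∀ z : ℝ≥0∞, (z ^ (2:ℝ)) ^ θ * (z ^ r) ^ (1 - θ) = z ^ q := by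
    intro z
    rw [← ENNReal.rpow_mul, ← ENNReal.rpow_mul,
      ← ENNReal.rpow_add_of_nonneg _ _ (by positivity) (by apply mul_nonneg <;> linarith), hq]
  simp_rw [e] at hH
  refine hH.trans ?_
  rw [← e (B * A)]
  gcongr

lemma ch_conv_real (u v d : ℂ) {r : ℝ} (hr : 0 ≤ r) :
    ENNReal.ofReal ((‖u‖ + ‖v‖) ^ r * ‖d‖) = (‖u‖ₑ + ‖v‖ₑ) ^ r * ‖d‖ₑ := by
  rw [ENNReal.ofReal_mul (by positivity), ← ENNReal.ofReal_rpow_of_nonneg (by positivity) hr,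
    ENNReal.ofReal_add (norm_nonneg _) (norm_nonneg _), ofReal_norm, ofReal_norm, ofReal_norm]

lemma ch_pm1 (z : ℝ≥0∞) {p : ℝ} (hp : 2 ≤ p) : z ^ (p - 1) = z ^ (p - 2) * z := by
  rw [show p - 1 = (p - 2) + 1 by ring,
    ENNReal.rpow_add_of_nonneg _ _ (by linarith) (by norm_num), ENNReal.rpow_one]

lemma ch_kernel_enorm (N : ℕ) (α A c : ℝ) (x y : EuclideanSpace ℝ (Fin N)) :
    ‖A * ‖x - y‖ ^ (α - (N : ℝ)) * c‖ₑ = ‖A‖ₑ * (chK N α (x - y) * ‖c‖ₑ) := by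
  rw [enorm_mul, enorm_mul, mul_assoc]
  congr 2
  exact Real.enorm_of_nonneg (Real.rpow_nonneg (norm_nonneg _) _)

lemma ch_riesz_int (N : ℕ) (hN : 3 ≤ N) (α p A : ℝ) (hα0 : 0 < α) (hαN : α < N) (hp : 2 ≤ p)
    {u : EuclideanSpace ℝ (Fin N) → ℂ} (hu : Continuous u) (hc : HasCompactSupport u)
    (x : EuclideanSpace ℝ (Fin N)) :
    Integrable (fun y => A * ‖x - y‖ ^ (α - (N : ℝ)) * ‖u y‖ ^ p) := by
  have hum := hu.measurable
  have hk1 := chK1_meas N α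
  refine ⟨by apply Measurable.aestronglyMeasurable; fun_prop, ?_⟩
  have hcp : Continuous (fun y => ‖u y‖ ^ p) :=
    hu.norm.rpow_const (fun _ => Or.inr (by linarith))
  have hcs : HasCompactSupport (fun y => ‖u y‖ ^ p) :=
    hc.comp_left (g := fun z : ℂ => ‖z‖ ^ p) (by
      simp only [norm_zero]; exact Real.zero_rpow (by linarith))
  have hint := hcp.integrable_of_hasCompactSupport (μ := volume) hcs
  obtain ⟨B, hB⟩ := hcs.exists_bound_of_continuous hcp
  have hk := chK1_int N hN α 1 le_rfl (by linarith)
  simp only [ENNReal.rpow_one] at hk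
  unfold HasFiniteIntegral
  have e := ch_kernel_enorm N α A
  calc ∫⁻ y, ‖A * ‖x - y‖ ^ (α - (N : ℝ)) * ‖u y‖ ^ p‖ₑ
      ≤ ∫⁻ y, ‖A‖ₑ * (chK1 N α (x - y) * ENNReal.ofReal B + ‖(‖u y‖ ^ p : ℝ)‖ₑ) := by
        refine lintegral_mono fun y => ?_
        rw [e]
        gcongr
        calc chK N α (x - y) * ‖(‖u y‖ ^ p : ℝ)‖ₑ
            ≤ (chK1 N α (x - y) + 1) * ‖(‖u y‖ ^ p : ℝ)‖ₑ := by
              gcongr; exact chK_le N α hαN _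
          _ = chK1 N α (x - y) * ‖(‖u y‖ ^ p : ℝ)‖ₑ + ‖(‖u y‖ ^ p : ℝ)‖ₑ := by ring
          _ ≤ _ := by
              gcongr
              rw [← ofReal_norm]
              exact ENNReal.ofReal_le_ofReal (hB y)
    _ = ‖A‖ₑ * ((∫⁻ y, chK1 N α y) * ENNReal.ofReal B + ∫⁻ y, ‖(‖u y‖ ^ p : ℝ)‖ₑ) := by
        rw [lintegral_const_mul _ (by fun_prop), lintegral_add_left (by fun_prop),
          lintegral_mul_const _ (by fun_prop), lintegral_sub_left_eq_self (chK1 N α) x]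
    _ < ⊤ := by
        have h2 : ∫⁻ y, ‖(‖u y‖ ^ p : ℝ)‖ₑ ≠ ⊤ := hint.2.ne
        refine ENNReal.mul_lt_top (by simp) (ENNReal.add_lt_top.2 ⟨?_, h2.lt_top⟩)
        exact ENNReal.mul_lt_top hk.lt_top (by simp)

lemma ch_pointwise (N : ℕ) (hN : 3 ≤ N) (α p : ℝ) (hα0 : 0 < α) (hαN : α < N) (hp : 2 ≤ p)
    {u v φ : EuclideanSpace ℝ (Fin N) → ℂ} (hu : Continuous u) (hcu : HasCompactSupport u)
    (hv : Continuous v) (hcv : HasCompactSupport v)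
    (w d g : EuclideanSpace ℝ (Fin N) → ℝ≥0∞)
    (hw : w = fun x => ‖u x‖ₑ + ‖v x‖ₑ) (hd : d = fun x => ‖u x - v x‖ₑ)
    (hg : g = fun x => ‖φ x‖ₑ)
    (x : EuclideanSpace ℝ (Fin N)) :
    ‖((rieszConv N α p u x * ‖u x‖ ^ (p - 2) : ℝ) • u x
              - (rieszConv N α p v x * ‖v x‖ ^ (p - 2) : ℝ) • v x) *
            (starRingEnd ℂ) (φ x)‖ₑ ≤
      ‖rieszConst N α‖ₑ * ENNReal.ofReal p *
      ((∫⁻ y, chK N α (x - y) * (w x ^ (p - 2) * w x * g x) * (w y ^ (p - 2) * w y * d y)) +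
       (∫⁻ y, chK N α (x - y) * (w x ^ (p - 2) * d x * g x) * (w y ^ (p - 2) * w y * w y))) := by
  have hum := hu.measurable
  have hvm := hv.measurable
  have hkm := chK_meas N α
  have hwm : Measurable w := by rw [hw]; fun_prop
  have hdm : Measurable d := by rw [hd]; fun_prop
  have hp0 : 0 ≤ p - 2 := by linarith
  have e := ch_kernel_enorm N α (rieszConst N α)
  have hR1 : ‖rieszConv N α p u x - rieszConv N α p v x‖ₑ ≤
      ‖rieszConst N α‖ₑ * ENNReal.ofReal p *
        ∫⁻ y, chK N α (x - y) * (w y ^ (p - 2) * w y * d y) := by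
    unfold rieszConv
    rw [← integral_sub (ch_riesz_int N hN α p _ hα0 hαN hp hu hcu x)
      (ch_riesz_int N hN α p _ hα0 hαN hp hv hcv x)]
    refine (enorm_integral_le_lintegral_enorm _).trans ?_
    rw [← lintegral_const_mul _ (by fun_prop)]
    refine lintegral_mono fun y => ?_
    rw [← mul_sub, e]
    have h1 : ‖(‖u y‖ ^ p - ‖v y‖ ^ p : ℝ)‖ₑ ≤
        ENNReal.ofReal p * (w y ^ (p - 2) * w y * d y) := by
      rw [← ofReal_norm, Real.norm_eq_abs, ← ch_pm1 _ hp, hw, hd]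
      simp only
      rw [← ch_conv_real _ _ _ (by linarith), ← ENNReal.ofReal_mul (by linarith)]
      exact ENNReal.ofReal_le_ofReal (ch_pow_diff _ _ (by linarith))
    calc _ ≤ ‖rieszConst N α‖ₑ * (chK N α (x - y) *
          (ENNReal.ofReal p * (w y ^ (p - 2) * w y * d y))) := by gcongr
      _ = _ := by ring
  have hR2 : ‖rieszConv N α p v x‖ₑ ≤
      ‖rieszConst N α‖ₑ * ∫⁻ y, chK N α (x - y) * (w y ^ (p - 2) * w y * w y) := by
    unfold rieszConv
    refine (enorm_integral_le_lintegral_enorm _).trans ?_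
    rw [← lintegral_const_mul _ (by fun_prop)]
    refine lintegral_mono fun y => ?_
    rw [e]
    gcongr
    rw [Real.enorm_of_nonneg (by positivity), ← ENNReal.ofReal_rpow_of_nonneg (norm_nonneg _)
      (by linarith), ofReal_norm]
    have : w y ^ (p - 2) * w y * w y = w y ^ p := by
      rw [← ch_pm1 _ hp, show p = (p - 1) + 1 by ring,
        ENNReal.rpow_add_of_nonneg _ _ (by linarith) (by norm_num), ENNReal.rpow_one]
      ring_nf
    rw [this]
    have hle : ‖v y‖ₑ ≤ w y := by rw [hw]; exact le_add_self
    exact ENNReal.rpow_le_rpow hle (by linarith)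
  have hV1 : ‖(‖u x‖ ^ (p - 2) : ℝ) • u x‖ₑ ≤ w x ^ (p - 2) * w x := by
    have hle : ‖u x‖ₑ ≤ w x := by rw [hw]; exact le_self_add
    rw [enorm_smul, Real.enorm_of_nonneg (by positivity),
      ← ENNReal.ofReal_rpow_of_nonneg (norm_nonneg _) hp0, ofReal_norm]
    gcongr
  have hV2 : ‖(‖u x‖ ^ (p - 2) : ℝ) • u x - (‖v x‖ ^ (p - 2) : ℝ) • v x‖ₑ ≤
      ENNReal.ofReal p * (w x ^ (p - 2) * d x) := by
    rw [← ofReal_norm, hw, hd]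
    simp only
    rw [← ch_conv_real _ _ _ hp0, ← ENNReal.ofReal_mul (by linarith)]
    exact ENNReal.ofReal_le_ofReal (ch_vec_diff _ _ hp)
  have hdec : ((rieszConv N α p u x * ‖u x‖ ^ (p - 2) : ℝ) • u x
              - (rieszConv N α p v x * ‖v x‖ ^ (p - 2) : ℝ) • v x) =
      (rieszConv N α p u x - rieszConv N α p v x) • ((‖u x‖ ^ (p - 2) : ℝ) • u x) +
      rieszConv N α p v x • ((‖u x‖ ^ (p - 2) : ℝ) • u x - (‖v x‖ ^ (p - 2) : ℝ) • v x) := by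
    rw [sub_smul, smul_sub, smul_smul, smul_smul, smul_smul]; abel
  have hφ : ‖(starRingEnd ℂ) (φ x)‖ₑ = g x := by
    rw [hg, ← ofReal_norm, RCLike.norm_conj, ofReal_norm]
  have s1 : ∫⁻ y, chK N α (x - y) * (w x ^ (p - 2) * w x * g x) * (w y ^ (p - 2) * w y * d y) =
      (w x ^ (p - 2) * w x * g x) * ∫⁻ y, chK N α (x - y) * (w y ^ (p - 2) * w y * d y) := by
    rw [← lintegral_const_mul _ (by fun_prop)]; congr 1; ext y; ring
  have s2 : ∫⁻ y, chK N α (x - y) * (w x ^ (p - 2) * d x * g x) * (w y ^ (p - 2) * w y * w y) =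
      (w x ^ (p - 2) * d x * g x) * ∫⁻ y, chK N α (x - y) * (w y ^ (p - 2) * w y * w y) := by
    rw [← lintegral_const_mul _ (by fun_prop)]; congr 1; ext y; ring
  rw [s1, s2, hdec, enorm_mul, hφ]
  calc _ ≤ (‖rieszConv N α p u x - rieszConv N α p v x‖ₑ * ‖(‖u x‖ ^ (p - 2) : ℝ) • u x‖ₑ +
        ‖rieszConv N α p v x‖ₑ *
          ‖(‖u x‖ ^ (p - 2) : ℝ) • u x - (‖v x‖ ^ (p - 2) : ℝ) • v x‖ₑ) * g x := by
        gcongr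
        refine (enorm_add_le _ _).trans ?_
        exact le_of_eq (congrArg₂ _ (enorm_smul _ _) (enorm_smul _ _))
    _ ≤ ((‖rieszConst N α‖ₑ * ENNReal.ofReal p *
        ∫⁻ y, chK N α (x - y) * (w y ^ (p - 2) * w y * d y)) * (w x ^ (p - 2) * w x) +
        (‖rieszConst N α‖ₑ * ∫⁻ y, chK N α (x - y) * (w y ^ (p - 2) * w y * w y)) *
          (ENNReal.ofReal p * (w x ^ (p - 2) * d x))) * g x := by
        gcongr
    _ = _ := by ring

/-- Local Lipschitz continuity (condition G2) of the Choquard nonlinearity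
`g(u) = (I_α∗|u|^p)|u|^{p−2}u` from `H¹` to `H^{−1}`, in duality form. -/
theorem choquard_nonlinearity_G2 (N : ℕ) (hN : 3 ≤ N) (α p : ℝ)
    (hα1 : max ((N : ℝ) - 4) 0 < α) (hαN : α < N)
    (hp1 : 2 ≤ p) (hp2 : p < ((N : ℝ) + α) / ((N : ℝ) - 2)) :
    ∀ M > (0 : ℝ), ∃ C > (0 : ℝ), ∀ u v φ : EuclideanSpace ℝ (Fin N) → ℂ,
      ContDiff ℝ (⊤ : ℕ∞) u → HasCompactSupport u →
      ContDiff ℝ (⊤ : ℕ∞) v → HasCompactSupport v →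
      ContDiff ℝ (⊤ : ℕ∞) φ → HasCompactSupport φ →
      H1Norm u ≤ M → H1Norm v ≤ M →
      ‖∫ x, ((rieszConv N α p u x * ‖u x‖ ^ (p - 2) : ℝ) • u x
              - (rieszConv N α p v x * ‖v x‖ ^ (p - 2) : ℝ) • v x) *
            (starRingEnd ℂ) (φ x)‖ ≤
        C * H1Norm (fun x => u x - v x) * H1Norm φ := by
  intro M hM
  have hα0 : 0 < α := lt_of_le_of_lt (le_max_right _ _) hα1
  have hp0 : 0 ≤ p - 2 := by linarith
  obtain ⟨C, hC, a, ha1, ha2, hbil⟩ := ch_bil N hN α p hα0 hαN hp2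
  obtain ⟨S, hS, hsob⟩ := ch_sobolev N hN
  obtain ⟨T, hT⟩ : ∃ T : ENNReal, T = S * ENNReal.ofReal M + S * ENNReal.ofReal M := ⟨_, rfl⟩
  have hTtop : T ≠ ⊤ := by rw [hT]; finiteness
  obtain ⟨Q, hQ⟩ : ∃ Q : ENNReal, Q = T ^ (p - 2) * T * T ^ (p - 2) * T * S * S := ⟨_, rfl⟩
  have hQtop : Q ≠ ⊤ := by rw [hQ]; finiteness
  obtain ⟨κ, hκ⟩ : ∃ κ : ENNReal, κ = ‖rieszConst N α‖ₑ * ENNReal.ofReal p *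
    ((C * Q + Q) + (C * Q + Q)) := ⟨_, rfl⟩
  have hκtop : κ ≠ ⊤ := by rw [hκ]; finiteness
  refine ⟨κ.toReal + 1, by positivity, ?_⟩
  intro u v φ hu hcu hv hcv hφ hcφ hMu hMv
  have hdsm : ContDiff ℝ (⊤ : ℕ∞) (fun x => u x - v x) := hu.sub hv
  have hcd : HasCompactSupport (fun x => u x - v x) := hcu.sub hcv
  obtain ⟨w, hw⟩ : ∃ w : EuclideanSpace ℝ (Fin N) → ENNReal,
    w = fun x => ‖u x‖ₑ + ‖v x‖ₑ := ⟨_, rfl⟩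
  obtain ⟨d, hd⟩ : ∃ d : EuclideanSpace ℝ (Fin N) → ENNReal,
    d = fun x => ‖u x - v x‖ₑ := ⟨_, rfl⟩
  obtain ⟨g, hg⟩ : ∃ g : EuclideanSpace ℝ (Fin N) → ENNReal, g = fun x => ‖φ x‖ₑ := ⟨_, rfl⟩
  have hum := hu.continuous.measurable
  have hvm := hv.continuous.measurable
  have hφm := hφ.continuous.measurable
  have hkm := chK_meas N α
  have hwm : Measurable w := by rw [hw]; fun_prop
  have hdm : Measurable d := by rw [hd]; fun_prop
  have hgm : Measurable g := by rw [hg]; fun_prop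
  obtain ⟨D, hD⟩ : ∃ D : ENNReal, D = ENNReal.ofReal (H1Norm (fun x => u x - v x)) := ⟨_, rfl⟩
  obtain ⟨Φ, hΦ⟩ : ∃ Φ : ENNReal, Φ = ENNReal.ofReal (H1Norm φ) := ⟨_, rfl⟩
  have hq : ∀ c : ℝ, 1 ≤ c → c ≤ a → chLq (p * c) w ≤ T ∧ chLq (p * c) d ≤ S * D ∧
      chLq (p * c) g ≤ S * Φ := by
    intro c hc1 hc2
    have hl : 2 ≤ p * c := by nlinarith
    have hr : p * c ≤ 2 * N / (N - 2) := le_trans (by gcongr) ha2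
    refine ⟨?_, ?_, ?_⟩
    · have h := ENNReal.lintegral_Lp_add_le (μ := volume) (p := p * c) (f := fun x => ‖u x‖ₑ)
        (g := fun x => ‖v x‖ₑ) (by fun_prop) (by fun_prop) (by linarith)
      have h1 : chLq (p * c) w ≤ chLq (p * c) (fun x => ‖u x‖ₑ) +
        chLq (p * c) (fun x => ‖v x‖ₑ) := by rw [hw]; exact h
      refine h1.trans ?_
      rw [hT]
      refine add_le_add ((hsob _ hl hr u hu hcu).trans ?_) ((hsob _ hl hr v hv hcv).trans ?_)
      · gcongr
      · gcongr
    · rw [hd, hD]; exact hsob _ hl hr _ hdsm hcd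
    · rw [hg, hΦ]; exact hsob _ hl hr _ hφ hcφ
  have hF1 : ∀ c : ℝ, 1 ≤ c → c ≤ a → chLq c (fun x => w x ^ (p - 2) * w x * g x) *
      chLq c (fun x => w x ^ (p - 2) * w x * d x) ≤ Q * (D * Φ) := by
    intro c hc1 hc2
    obtain ⟨h1, h2, h3⟩ := hq c hc1 hc2
    calc _ ≤ (T ^ (p - 2) * T * (S * Φ)) * (T ^ (p - 2) * T * (S * D)) := by
          gcongr
          · exact (ch_holder3 hp1 hc1 hwm hwm hgm).trans (by gcongr)
          · exact (ch_holder3 hp1 hc1 hwm hwm hdm).trans (by gcongr)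
      _ = _ := by rw [hQ]; ring
  have hF2 : ∀ c : ℝ, 1 ≤ c → c ≤ a → chLq c (fun x => w x ^ (p - 2) * d x * g x) *
      chLq c (fun x => w x ^ (p - 2) * w x * w x) ≤ Q * (D * Φ) := by
    intro c hc1 hc2
    obtain ⟨h1, h2, h3⟩ := hq c hc1 hc2
    calc _ ≤ (T ^ (p - 2) * (S * D) * (S * Φ)) * (T ^ (p - 2) * T * T) := by
          gcongr
          · exact (ch_holder3 hp1 hc1 hwm hdm hgm).trans (by gcongr)
          · exact (ch_holder3 hp1 hc1 hwm hwm hwm).trans (by gcongr)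
      _ = _ := by rw [hQ]; ring
  have hmain : ‖∫ x, ((rieszConv N α p u x * ‖u x‖ ^ (p - 2) : ℝ) • u x
              - (rieszConv N α p v x * ‖v x‖ ^ (p - 2) : ℝ) • v x) *
            (starRingEnd ℂ) (φ x)‖ₑ ≤ κ * (D * Φ) := by
    refine (enorm_integral_le_lintegral_enorm _).trans ?_
    refine (lintegral_mono fun x => ch_pointwise N hN α p hα0 hαN hp1 hu.continuous hcu
      hv.continuous hcv w d g hw hd hg x).trans ?_
    have hm1 : Measurable (fun x => ∫⁻ y, chK N α (x - y) * (w x ^ (p - 2) * w x * g x) *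
        (w y ^ (p - 2) * w y * d y)) :=
      Measurable.lintegral_prod_right' (f := fun z : EuclideanSpace ℝ (Fin N) ×
        EuclideanSpace ℝ (Fin N) => chK N α (z.1 - z.2) * (w z.1 ^ (p - 2) * w z.1 * g z.1) *
        (w z.2 ^ (p - 2) * w z.2 * d z.2)) (by fun_prop)
    have hm2 : Measurable (fun x => ∫⁻ y, chK N α (x - y) * (w x ^ (p - 2) * d x * g x) *
        (w y ^ (p - 2) * w y * w y)) :=
      Measurable.lintegral_prod_right' (f := fun z : EuclideanSpace ℝ (Fin N) ×
        EuclideanSpace ℝ (Fin N) => chK N α (z.1 - z.2) * (w z.1 ^ (p - 2) * d z.1 * g z.1) *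
        (w z.2 ^ (p - 2) * w z.2 * w z.2)) (by fun_prop)
    rw [lintegral_const_mul _ (by exact hm1.add hm2), lintegral_add_left hm1]
    calc _ ≤ ‖rieszConst N α‖ₑ * ENNReal.ofReal p *
          ((C * (Q * (D * Φ)) + Q * (D * Φ)) + (C * (Q * (D * Φ)) + Q * (D * Φ))) := by
          gcongr
          · refine (hbil (fun x => w x ^ (p - 2) * w x * g x)
              (fun x => w x ^ (p - 2) * w x * d x) (by fun_prop) (by fun_prop)).trans ?_
            exact add_le_add (mul_le_mul_right (hF1 a ha1 le_rfl) C) (hF1 1 le_rfl ha1)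
          · refine (hbil (fun x => w x ^ (p - 2) * d x * g x)
              (fun x => w x ^ (p - 2) * w x * w x) (by fun_prop) (by fun_prop)).trans ?_
            exact add_le_add (mul_le_mul_right (hF2 a ha1 le_rfl) C) (hF2 1 le_rfl ha1)
      _ = _ := by rw [hκ]; ring
  have hD0 : 0 ≤ H1Norm (fun x => u x - v x) := Real.sqrt_nonneg _
  have hΦ0 : 0 ≤ H1Norm φ := Real.sqrt_nonneg _
  have hfin := ENNReal.toReal_mono (by rw [hD, hΦ]; finiteness) hmain
  rw [toReal_enorm, ENNReal.toReal_mul, ENNReal.toReal_mul, hD, hΦ, ENNReal.toReal_ofReal hD0,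
    ENNReal.toReal_ofReal hΦ0] at hfin
  refine hfin.trans ?_
  have := mul_nonneg hD0 hΦ0
  nlinarith
end

section
/- Let N ≥ 3, α ∈ (0, N) and 2 ≤ p < (N+α)/(N−2). For every M > 0 there exists C > 0 such that for every radial smooth compactly supported u : ℝ^N → ℂ with ‖u‖_{L²} ≤ M and every R > 1, ∫_{|x| > R} (I_α ∗ |u|^p)(x) |u(x)|^p dx ≤ C ( R^{−(N−1)(p−(N+α)/N)} ‖∇u‖_{L²}^{p−(N+α)/N} + R^{−(N−α+(N−1)(p−2)/2)} ‖∇u‖_{L²}^{(N+1)(p−2)/2} ). -/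
open MeasureTheory Real
open scoped BigOperators

lemma ch_fderiv_le {N : ℕ} (u : EuclideanSpace ℝ (Fin N) → ℂ) (x : EuclideanSpace ℝ (Fin N)) :
    ‖fderiv ℝ u x‖ ^ 2 ≤ gradSq u x := by
  have h0 : 0 ≤ gradSq u x := Finset.sum_nonneg (fun i _ => sq_nonneg _)
  have h : ‖fderiv ℝ u x‖ ≤ Real.sqrt (gradSq u x) := by
    refine ContinuousLinearMap.opNorm_le_bound _ (Real.sqrt_nonneg _) (fun v => ?_)
    have hv : v = ∑ i, v i • EuclideanSpace.single i (1 : ℝ) := by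
      ext j
      simp [Finset.sum_apply, Pi.single_apply]
    have h1 : fderiv ℝ u x v = ∑ i, v i • fderiv ℝ u x (EuclideanSpace.single i (1 : ℝ)) := by
      conv_lhs => rw [hv]
      simp only [map_sum, map_smul]
    rw [h1]
    calc _ ≤ ∑ i, ‖v i • fderiv ℝ u x (EuclideanSpace.single i (1 : ℝ))‖ := norm_sum_le _ _
      _ = ∑ i, ‖fderiv ℝ u x (EuclideanSpace.single i (1 : ℝ))‖ * ‖v i‖ := by
        simp only [norm_smul, mul_comm]
      _ ≤ √(∑ i, ‖fderiv ℝ u x (EuclideanSpace.single i (1 : ℝ))‖ ^ 2) * √(∑ i, ‖v i‖ ^ 2) :=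
        Real.sum_mul_le_sqrt_mul_sqrt _ _ _
      _ = _ := by rw [EuclideanSpace.norm_eq]; rfl
  calc _ ≤ Real.sqrt (gradSq u x) ^ 2 := by gcongr
    _ = _ := Real.sq_sqrt h0

lemma ch_grad_int {N : ℕ} {u : EuclideanSpace ℝ (Fin N) → ℂ} (hu : ContDiff ℝ (⊤ : ℕ∞) u)
    (hc : HasCompactSupport u) : Integrable (gradSq u) := by
  have hcf : Continuous (fderiv ℝ u) := hu.continuous_fderiv (by simp)
  apply Continuous.integrable_of_hasCompactSupport
  · unfold gradSq
    fun_prop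
  · have := hc.fderiv (𝕜 := ℝ)
    refine this.mono ?_
    intro x hx
    rw [Function.mem_support] at hx ⊢
    contrapose! hx
    simp [gradSq, hx]

lemma ch_fderiv_L2 {N : ℕ} {u : EuclideanSpace ℝ (Fin N) → ℂ} (hu : ContDiff ℝ (⊤ : ℕ∞) u)
    (hc : HasCompactSupport u) : ∫ x, ‖fderiv ℝ u x‖ ^ 2 ≤ ∫ x, gradSq u x := by
  apply integral_mono_of_nonneg (Filter.Eventually.of_forall fun x => by positivity)
    (ch_grad_int hu hc) (Filter.Eventually.of_forall fun x => ch_fderiv_le u x)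

lemma ch_CS {N : ℕ} {u : EuclideanSpace ℝ (Fin N) → ℂ} (hu : ContDiff ℝ (⊤ : ℕ∞) u)
    (hc : HasCompactSupport u) : ∫ x, ‖u x‖ * ‖fderiv ℝ u x‖ ≤
      √(∫ x, ‖u x‖ ^ 2) * √(∫ x, gradSq u x) := by
  have hcf : Continuous (fderiv ℝ u) := hu.continuous_fderiv (by simp)
  have h1 : MemLp (fun x => ‖u x‖) (ENNReal.ofReal 2) volume :=
    hu.continuous.norm.memLp_of_hasCompactSupport hc.norm
  have h2 : MemLp (fun x => ‖fderiv ℝ u x‖) (ENNReal.ofReal 2) volume :=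
    hcf.norm.memLp_of_hasCompactSupport (hc.fderiv (𝕜 := ℝ)).norm
  have := integral_mul_le_Lp_mul_Lq_of_nonneg (μ := volume) Real.HolderConjugate.two_two
    (Filter.Eventually.of_forall fun x => norm_nonneg (u x))
    (Filter.Eventually.of_forall fun x => norm_nonneg (fderiv ℝ u x)) h1 h2
  refine this.trans ?_
  rw [Real.sqrt_eq_rpow, Real.sqrt_eq_rpow]
  simp only [Real.rpow_two]
  exact mul_le_mul_of_nonneg_left (Real.rpow_le_rpow
    (integral_nonneg fun x => by positivity) (ch_fderiv_L2 hu hc) (by norm_num)) (by positivity)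

lemma ch_strauss (N : ℕ) (hN : 3 ≤ N) : ∃ C > (0 : ℝ), ∀ u : EuclideanSpace ℝ (Fin N) → ℂ,
      ContDiff ℝ (⊤ : ℕ∞) u → HasCompactSupport u →
      (∀ x y : EuclideanSpace ℝ (Fin N), ‖x‖ = ‖y‖ → u x = u y) →
      ∀ x, x ≠ 0 → ‖x‖ ^ (N - 1) * ‖u x‖ ^ 2 ≤
        C * (√(∫ x, ‖u x‖ ^ 2) * √(∫ x, gradSq u x)) := by
  have : NeZero N := ⟨by omega⟩
  set κ : ℝ := (volume : Measure (EuclideanSpace ℝ (Fin N))).real (Metric.ball 0 1) with hκ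
  have hκ0 : 0 < κ := by
    rw [hκ]
    exact ENNReal.toReal_pos (Metric.measure_ball_pos _ _ one_pos).ne' measure_ball_lt_top.ne
  have hN0 : (0:ℝ) < N := by positivity
  refine ⟨2 / (N * κ), by positivity, fun u hu hc hr x hx => ?_⟩
  have hcf : Continuous (fderiv ℝ u) := hu.continuous_fderiv (by simp)
  set r := ‖x‖ with hrdef
  have hr0 : 0 < r := norm_pos_iff.mpr hx
  set e : EuclideanSpace ℝ (Fin N) := r⁻¹ • x with he
  have hen : ‖e‖ = 1 := by rw [he, norm_smul, norm_inv, Real.norm_of_nonneg hr0.le, ← hrdef]; field_simp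
  have hxe : x = r • e := by rw [he, smul_smul, mul_inv_cancel₀ hr0.ne', one_smul]
  set g : ℝ → ℂ := fun t => u (t • e) with hg
  set g' : ℝ → ℂ := fun t => fderiv ℝ u (t • e) e with hg'
  have hder : ∀ t, HasDerivAt g (g' t) t := by
    intro t
    have h1 : HasFDerivAt u (fderiv ℝ u (t • e)) (t • e) :=
      (hu.differentiable (by simp) _).hasFDerivAt
    have h2 : HasDerivAt (fun t : ℝ => t • e) e t := by
      simpa using (hasDerivAt_id t).smul_const e
    exact h1.comp_hasDerivAt t h2
  have hgc : Continuous g := hu.continuous.comp (by fun_prop)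
  have hg'c : Continuous g' := by
    have : Continuous fun t : ℝ => fderiv ℝ u (t • e) := hcf.comp (by fun_prop)
    exact this.clm_apply continuous_const
  -- relation with fderiv at general points
  have hgu : ∀ y, g ‖y‖ = u y := fun y => hr _ _ (by simp [norm_smul, hen])
  have hg'le : ∀ y, y ≠ 0 → ‖g' ‖y‖‖ ≤ ‖fderiv ℝ u y‖ := by
    intro y hy
    have hy0 : 0 < ‖y‖ := norm_pos_iff.mpr hy
    set w := ‖y‖⁻¹ • y with hw
    have hwn : ‖w‖ = 1 := by rw [hw, norm_smul, norm_inv, norm_norm]; field_simp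
    have hyw : ‖y‖ • w = y := by rw [hw, smul_smul, mul_inv_cancel₀ hy0.ne', one_smul]
    have hgw : g = fun t => u (t • w) := by
      funext t
      exact hr _ _ (by simp [norm_smul, hen, hwn])
    have h1 : HasFDerivAt u (fderiv ℝ u y) (‖y‖ • w) := by
      rw [hyw]; exact (hu.differentiable (by simp) _).hasFDerivAt
    have h2 : HasDerivAt (fun t : ℝ => t • w) w ‖y‖ := by
      simpa using (hasDerivAt_id ‖y‖).smul_const w
    have h3 := h1.comp_hasDerivAt ‖y‖ h2
    have h4 : HasDerivAt g (fderiv ℝ u y w) ‖y‖ := by rw [hgw]; exact h3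
    rw [(hder ‖y‖).unique h4]
    calc _ ≤ ‖fderiv ℝ u y‖ * ‖w‖ := ContinuousLinearMap.le_opNorm _ _
      _ = _ := by rw [hwn, mul_one]
  -- compact support of g
  obtain ⟨T, hT0, hT⟩ : ∃ T, r < T ∧ ∀ t, T ≤ t → g t = 0 := by
    obtain ⟨T, hT⟩ := hc.isCompact.isBounded.subset_closedBall (0 : EuclideanSpace ℝ (Fin N))
    refine ⟨max (T + 1) (r + 1), by simp, fun t ht => ?_⟩
    by_contra hne
    have h1 : t • e ∈ tsupport u := subset_tsupport _ hne
    have h2 := hT h1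
    rw [mem_closedBall_zero_iff, norm_smul, hen, mul_one, Real.norm_eq_abs] at h2
    have := le_abs_self t
    have := le_max_left (T+1) (r+1)
    linarith
  set h : ℝ → ℝ := fun t => ‖g t‖ * ‖g' t‖ with hh
  have hhc : Continuous h := hgc.norm.mul hg'c.norm
  have hh0 : ∀ t, 0 ≤ h t := fun t => by positivity
  have hhT : ∀ t, T ≤ t → h t = 0 := fun t ht => by simp [hh, hT t ht]
  -- FTC
  have hphi : ∀ t, HasDerivAt (fun t => ‖g t‖ ^ 2) (2 * inner ℝ (g t) (g' t)) t :=
    fun t => (hder t).norm_sq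
  have hinnc : Continuous fun t => 2 * inner ℝ (g t) (g' t) := by fun_prop
  have hftc : ∫ t in r..T, 2 * inner ℝ (g t) (g' t) = ‖g T‖ ^ 2 - ‖g r‖ ^ 2 :=
    intervalIntegral.integral_eq_sub_of_hasDerivAt (fun t _ => hphi t)
      (hinnc.intervalIntegrable _ _)
  have hgT : ‖g T‖ ^ 2 = 0 := by simp [hT T le_rfl]
  have step1 : ‖g r‖ ^ 2 = ∫ t in r..T, -(2 * inner ℝ (g t) (g' t)) := by
    rw [intervalIntegral.integral_neg, hftc, hgT]; ring
  have step2 : r ^ (N-1) * ‖g r‖ ^ 2 ≤ ∫ t in r..T, 2 * (t ^ (N-1) * h t) := by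
    rw [step1, ← intervalIntegral.integral_const_mul]
    apply intervalIntegral.integral_mono_on hT0.le
    · exact Continuous.intervalIntegrable (by fun_prop) _ _
    · exact Continuous.intervalIntegrable (by fun_prop) _ _
    intro t ht
    have h1 : -(2 * inner ℝ (g t) (g' t)) ≤ 2 * h t := by
      have := abs_real_inner_le_norm (g t) (g' t)
      have := (abs_le.mp this).1
      simp only [hh]; linarith
    have h2 : r ^ (N-1) ≤ t ^ (N-1) := pow_le_pow_left₀ hr0.le ht.1 _
    calc _ ≤ r ^ (N-1) * (2 * h t) := by gcongr
      _ ≤ t ^ (N-1) * (2 * h t) := by have := hh0 t; gcongr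
      _ = _ := by ring
  have hint : IntegrableOn (fun t => t ^ (N-1) * h t) (Set.Ioi 0) := by
    have : IntegrableOn (fun t => t ^ (N-1) * h t) (Set.Ioc 0 T) :=
      (Continuous.integrableOn_Icc (by fun_prop)).mono_set Set.Ioc_subset_Icc_self
    refine this.of_forall_sdiff_eq_zero measurableSet_Ioi ?_
    intro t ht
    have : T ≤ t := by
      by_contra hlt
      exact ht.2 ⟨ht.1, (not_le.mp hlt).le⟩
    simp [hhT t this]
  have step3 : ∫ t in r..T, (t ^ (N-1) * h t) ≤ ∫ t in Set.Ioi (0:ℝ), t ^ (N-1) * h t := by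
    rw [intervalIntegral.integral_of_le hT0.le]
    apply setIntegral_mono_set hint
    · filter_upwards [ae_restrict_mem measurableSet_Ioi] with t ht
      have := hh0 t
      have : (0:ℝ) < t := ht
      simp only [Pi.zero_apply]; positivity
    · apply Filter.Eventually.of_forall
      intro t ht
      exact lt_trans hr0 ht.1
  have polar := integral_fun_norm_addHaar (volume : Measure (EuclideanSpace ℝ (Fin N))) h
  simp only [finrank_euclideanSpace, Fintype.card_fin, smul_eq_mul, nsmul_eq_mul] at polar
  rw [← hκ] at polar
  have step4 : ∫ y : EuclideanSpace ℝ (Fin N), h ‖y‖ ≤ ∫ y, ‖u y‖ * ‖fderiv ℝ u y‖ := by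
    apply integral_mono_of_nonneg
    · exact Filter.Eventually.of_forall fun y => hh0 _
    · apply Continuous.integrable_of_hasCompactSupport
      · exact hu.continuous.norm.mul hcf.norm
      · exact hc.norm.mul_right
    · have : Nontrivial (EuclideanSpace ℝ (Fin N)) := ⟨x, 0, hx⟩
      have : ∀ᵐ y : EuclideanSpace ℝ (Fin N), y ≠ 0 := by
        simp [ae_iff]
      filter_upwards [this] with y hy
      simp only [hh]
      rw [hgu y]
      gcongr
      exact hg'le y hy
  have step5 := step4.trans (ch_CS hu hc)
  rw [polar] at step5
  have hux : u x = g r := by rw [hxe]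
  rw [hux]
  rw [intervalIntegral.integral_const_mul] at step2
  refine (step2.trans (mul_le_mul_of_nonneg_left step3 (by norm_num))).trans ?_
  rw [div_mul_eq_mul_div, le_div_iff₀ (by positivity)]
  linarith

lemma ch_lint {N : ℕ} {F : Type*} [NormedAddCommGroup F] {f : EuclideanSpace ℝ (Fin N) → F}
    (hf : Continuous f) (hc : HasCompactSupport f) {r : ℝ} (hr : 0 < r) :
    Integrable (fun x => ‖f x‖ ^ r) ∧ ∫⁻ x, ‖f x‖ₑ ^ r = ENNReal.ofReal (∫ x, ‖f x‖ ^ r) := by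
  have hi : Integrable (fun x => ‖f x‖ ^ r) := by
    apply Continuous.integrable_of_hasCompactSupport
    · exact hf.norm.rpow_const (fun x => Or.inr hr.le)
    · exact hc.norm.rpow_const hr.ne'
  refine ⟨hi, ?_⟩
  rw [ofReal_integral_eq_lintegral_ofReal hi (Filter.Eventually.of_forall fun x => by positivity)]
  congr 1
  funext x
  rw [← ofReal_norm, ENNReal.ofReal_rpow_of_nonneg (norm_nonneg _) hr.le]

lemma ch_GN (N : ℕ) (hN : 3 ≤ N) (p : ℝ) (hp1 : 2 ≤ p) (hp2 : p ≤ 2 * N / ((N:ℝ) - 2)) (M : ℝ)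
    (hM : 0 < M) :
    ∃ C > (0 : ℝ), ∀ u : EuclideanSpace ℝ (Fin N) → ℂ,
      ContDiff ℝ (⊤ : ℕ∞) u → HasCompactSupport u → √(∫ x, ‖u x‖ ^ 2) ≤ M →
      ∫ x, ‖u x‖ ^ p ≤ C * √(∫ x, gradSq u x) ^ ((N : ℝ) * (p - 2) / 2) := by
  have hN3 : (3:ℝ) ≤ N := by exact_mod_cast hN
  have hN2 : (0:ℝ) < N - 2 := by linarith
  set q : ℝ := 2 * N / ((N:ℝ) - 2) with hq
  have hq0 : 0 < q := by positivity
  set t : ℝ := (p - 2) * (N - 2) / 4 with ht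
  have ht0 : 0 ≤ t := by
    have : 0 ≤ p - 2 := by linarith
    positivity
  have ht1 : t ≤ 1 := by
    rw [ht, div_le_one (by norm_num)]
    rw [le_div_iff₀ hN2] at hp2
    nlinarith
  have hqt : q * t = N * (p - 2) / 2 := by
    rw [hq, ht]; field_simp; norm_num; ring
  obtain ⟨q', hq'⟩ : ∃ q' : NNReal, (q' : ℝ) = q := ⟨q.toNNReal, Real.coe_toNNReal _ hq0.le⟩
  set S : ℝ := max 1 (SNormLESNormFDerivOfEqConst ℂ
    (volume : Measure (EuclideanSpace ℝ (Fin N))) ((2 : NNReal) : ℝ) : ℝ) with hS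
  have hS1 : 1 ≤ S := le_max_left _ _
  have hS0 : 0 < S := by linarith
  refine ⟨(M ^ 2) ^ (1 - t) * S ^ (q * t), by positivity, fun u hu hc hu2 => ?_⟩
  have hcf : Continuous (fderiv ℝ u) := hu.continuous_fderiv (by simp)
  have hA : ∫ x, ‖u x‖ ^ (2:ℝ) ≤ M ^ 2 := by
    simp only [Real.rpow_two]
    exact (Real.sqrt_le_left hM.le).mp hu2
  obtain ⟨-, h2⟩ := ch_lint hu.continuous hc (r := 2) (by norm_num)
  obtain ⟨-, hqq⟩ := ch_lint hu.continuous hc (r := q) hq0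
  obtain ⟨-, hpp⟩ := ch_lint hu.continuous hc (r := p) (by linarith)
  obtain ⟨-, hff⟩ := ch_lint hcf (hc.fderiv (𝕜 := ℝ)) (r := 2) (by norm_num)
  set G := √(∫ x, gradSq u x) with hG
  have hG0 : 0 ≤ G := Real.sqrt_nonneg _
  -- Sobolev
  have sob := eLpNorm_le_eLpNorm_fderiv_of_eq (volume : Measure (EuclideanSpace ℝ (Fin N)))
    (hu.of_le (by simp)) hc (p := 2) (p' := q') (by norm_num) (by simp; omega) (by
      simp only [finrank_euclideanSpace, Fintype.card_fin, hq', hq]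
      push_cast
      field_simp)
  rw [eLpNorm_nnreal_eq_lintegral (by rw [← NNReal.coe_ne_zero]; rw [hq']; exact hq0.ne'),
    eLpNorm_nnreal_eq_lintegral (by norm_num)] at sob
  simp only [hq', NNReal.coe_ofNat] at sob
  rw [hqq, hff] at sob
  set b := ∫ x, ‖u x‖ ^ q with hb
  have hb0 : 0 ≤ b := integral_nonneg fun x => by positivity
  set d := ∫ x, ‖fderiv ℝ u x‖ ^ (2:ℝ) with hd
  have hd0 : 0 ≤ d := integral_nonneg fun x => by positivity
  have hdG : d ^ (1 / (2:ℝ)) ≤ G := by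
    rw [hG, Real.sqrt_eq_rpow]
    have := ch_fderiv_L2 hu hc
    simp only [hd, Real.rpow_two] at *
    exact Real.rpow_le_rpow hd0 this (by norm_num)
  have hb1 : b ^ (1 / q) ≤ S * G := by
    rw [ENNReal.ofReal_rpow_of_nonneg hb0 (by positivity),
      ENNReal.ofReal_rpow_of_nonneg hd0 (by positivity), ← ENNReal.ofReal_coe_nnreal,
      ← ENNReal.ofReal_mul (by positivity), ENNReal.ofReal_le_ofReal_iff (by positivity)] at sob
    refine sob.trans ?_
    exact mul_le_mul (le_max_right _ _) hdG (by positivity) hS0.le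
  have hb2 : b ≤ (S * G) ^ q := by
    have := Real.rpow_le_rpow (by positivity) hb1 hq0.le
    rwa [← Real.rpow_mul hb0, one_div_mul_cancel hq0.ne', Real.rpow_one] at this
  -- Hölder
  have hold := ENNReal.lintegral_mul_norm_pow_le (μ := (volume : Measure (EuclideanSpace ℝ (Fin N))))
    (f := fun x => ‖u x‖ₑ ^ (2:ℝ)) (g := fun x => ‖u x‖ₑ ^ q)
    (hu.continuous.enorm.measurable.pow_const _).aemeasurable
    (hu.continuous.enorm.measurable.pow_const _).aemeasurable (p := 1 - t) (q := t)
    (by linarith) ht0 (by ring)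
  have hpt : ∀ x, (‖u x‖ₑ ^ (2:ℝ)) ^ (1 - t) * (‖u x‖ₑ ^ q) ^ t = ‖u x‖ₑ ^ p := by
    intro x
    rw [← ENNReal.rpow_mul, ← ENNReal.rpow_mul, ← ENNReal.rpow_add_of_nonneg]
    · congr 1
      rw [hqt, ht]; ring
    · nlinarith
    · positivity
  simp only [hpt] at hold
  rw [hpp, h2, hqq] at hold
  set a := ∫ x, ‖u x‖ ^ (2:ℝ) with ha
  have ha0 : 0 ≤ a := integral_nonneg fun x => by positivity
  rw [ENNReal.ofReal_rpow_of_nonneg ha0 (by linarith), ENNReal.ofReal_rpow_of_nonneg hb0 ht0,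
    ← ENNReal.ofReal_mul (by positivity), ENNReal.ofReal_le_ofReal_iff (by positivity)] at hold
  refine hold.trans ?_
  calc _ ≤ (M ^ 2) ^ (1 - t) * ((S * G) ^ q) ^ t := by
        have : 0 ≤ 1 - t := by linarith
        gcongr
    _ = _ := by
      rw [← Real.rpow_mul (by positivity), Real.mul_rpow hS0.le hG0, hqt, mul_assoc]

lemma ch_ball (N : ℕ) (hN : 3 ≤ N) (α : ℝ) (hα0 : 0 < α) : ∃ K > (0 : ℝ), ∀ ρ > (0:ℝ),
    IntegrableOn (fun z : EuclideanSpace ℝ (Fin N) => ‖z‖ ^ (α - N)) (Metric.ball 0 ρ) ∧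
    ∫ z in Metric.ball (0 : EuclideanSpace ℝ (Fin N)) ρ, ‖z‖ ^ (α - N) = K * ρ ^ α := by
  have : NeZero N := ⟨by omega⟩
  have : Nontrivial (EuclideanSpace ℝ (Fin N)) := by
    refine ⟨EuclideanSpace.single 0 1, 0, fun h => ?_⟩
    have := congrArg norm h
    simp at this
  set κ : ℝ := (volume : Measure (EuclideanSpace ℝ (Fin N))).real (Metric.ball 0 1) with hκ
  have hκ0 : 0 < κ := by
    rw [hκ]
    exact ENNReal.toReal_pos (Metric.measure_ball_pos _ _ one_pos).ne' measure_ball_lt_top.ne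
  have hN0 : (0:ℝ) < N := by positivity
  have hpow : ∀ y : ℝ, 0 < y → y ^ (N - 1) * y ^ (α - N) = y ^ (α - 1) := by
    intro y hy
    rw [← Real.rpow_natCast, ← Real.rpow_add hy]
    congr 1
    push_cast [Nat.cast_sub (show 1 ≤ N by omega)]
    ring
  refine ⟨N * κ / α, by positivity, fun ρ hρ => ⟨?_, ?_⟩⟩
  · rw [integrableOn_fun_norm_addHaar volume (f := fun y : ℝ => y ^ (α - N))]
    simp only [finrank_euclideanSpace, Fintype.card_fin, smul_eq_mul]
    rw [integrableOn_congr_fun (g := fun y : ℝ => y ^ (α - 1)) (fun y hy => hpow y hy.1)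
      measurableSet_Ioo]
    have := (intervalIntegral.intervalIntegrable_rpow' (a := 0) (b := ρ) (r := α - 1) (by linarith))
    exact (intervalIntegrable_iff_integrableOn_Ioo_of_le hρ.le).mp this
  · have h1 : ∫ z in Metric.ball (0 : EuclideanSpace ℝ (Fin N)) ρ, ‖z‖ ^ (α - N)
        = ∫ z : EuclideanSpace ℝ (Fin N),
          (Set.Iio ρ).indicator (fun y : ℝ => y ^ (α - N)) ‖z‖ := by
      rw [← integral_indicator measurableSet_ball]
      congr 1
      funext z
      simp [Set.indicator]
    rw [h1, integral_fun_norm_addHaar]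
    simp only [finrank_euclideanSpace, Fintype.card_fin, smul_eq_mul, nsmul_eq_mul]
    rw [← hκ]
    have h2 : ∫ y in Set.Ioi (0:ℝ), y ^ (N - 1) * (Set.Iio ρ).indicator (fun y : ℝ => y ^ (α - N)) y
        = ∫ y in (0:ℝ)..ρ, y ^ (α - 1) := by
      rw [intervalIntegral.integral_of_le hρ.le, integral_Ioc_eq_integral_Ioo,
        ← integral_indicator measurableSet_Ioi, ← integral_indicator measurableSet_Ioo]
      congr 1
      funext y
      by_cases hy : 0 < y
      · by_cases hy2 : y < ρ
        · simp [Set.indicator, hy, hy2, hpow]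
        · simp [Set.indicator, hy, hy2]
      · simp [Set.indicator, hy]
    rw [h2, integral_rpow (Or.inl (by linarith))]
    rw [sub_add_cancel, Real.zero_rpow hα0.ne']
    ring

lemma ch_pot (N : ℕ) (hN : 3 ≤ N) (α : ℝ) (hα0 : 0 < α) (hαN : α < N) : ∃ K > (0 : ℝ),
    ∀ (f : EuclideanSpace ℝ (Fin N) → ℝ) (A B : ℝ), 0 < A → 0 < B → (∀ y, 0 ≤ f y) →
    (∀ y, f y ≤ A) → Integrable f → ∫ y, f y ≤ B → ∀ x,
    ∃ F : EuclideanSpace ℝ (Fin N) → ℝ, Integrable F ∧ (∀ y, ‖x - y‖ ^ (α - N) * f y ≤ F y) ∧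
     ∫ y, F y ≤ K * (A ^ (1 - α / N) * B ^ (α / N)) := by
  obtain ⟨K, hK, hball⟩ := ch_ball N hN α hα0
  have hN0 : (0:ℝ) < N := by linarith
  refine ⟨K + 1, by positivity, fun f A B hA hB hf0 hfA hfi hfB x => ?_⟩
  set ρ : ℝ := (B / A) ^ (1 / (N:ℝ)) with hρ
  have hρ0 : 0 < ρ := by positivity
  obtain ⟨hi, hv⟩ := hball ρ hρ0
  set J : EuclideanSpace ℝ (Fin N) → ℝ :=
    (Metric.ball (0 : EuclideanSpace ℝ (Fin N)) ρ).indicator (fun z => ‖z‖ ^ (α - N)) with hJ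
  have hJi : Integrable J := by rw [hJ, integrable_indicator_iff measurableSet_ball]; exact hi
  have hJv : ∫ z, J z = K * ρ ^ α := by rw [hJ, integral_indicator measurableSet_ball, hv]
  have hJi' : Integrable (fun y => J (x - y)) := hJi.comp_sub_left x
  have hJv' : ∫ y, J (x - y) = K * ρ ^ α := by rw [integral_sub_left_eq_self J volume x, hJv]
  refine ⟨fun y => A * J (x - y) + ρ ^ (α - N) * f y,
    (hJi'.const_mul A).add (hfi.const_mul _), fun y => ?_, ?_⟩
  · by_cases hy : ‖x - y‖ < ρ
    · have : J (x - y) = ‖x - y‖ ^ (α - N) := by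
        simp [hJ, hy]
      simp only [this]
      have h1 : 0 ≤ ρ ^ (α - N) * f y := mul_nonneg (by positivity) (hf0 y)
      have h2 : ‖x - y‖ ^ (α - N) * f y ≤ ‖x - y‖ ^ (α - N) * A := by
        have := hfA y
        gcongr
      linarith
    · have : J (x - y) = 0 := by
        simp [hJ, hy]
      simp only [this]
      push Not at hy
      have h1 : ‖x - y‖ ^ (α - N) ≤ ρ ^ (α - N) :=
        Real.rpow_le_rpow_of_nonpos hρ0 hy (by linarith)
      have := mul_le_mul_of_nonneg_right h1 (hf0 y)
      linarith
  · rw [integral_add (hJi'.const_mul A) (hfi.const_mul _), integral_const_mul, integral_const_mul,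
      hJv']
    have e1 : A * ρ ^ α = A ^ (1 - α / N) * B ^ (α / N) := by
      rw [hρ, ← Real.rpow_mul (by positivity), Real.div_rpow hB.le hA.le,
        Real.rpow_sub hA, Real.rpow_one]
      rw [show 1 / (N:ℝ) * α = α / N by ring]
      field_simp
    have e2 : ρ ^ (α - N) * B = A ^ (1 - α / N) * B ^ (α / N) := by
      have h3 : ρ ^ (N:ℝ) = B / A := by
        rw [hρ, ← Real.rpow_mul (by positivity), one_div_mul_cancel hN0.ne', Real.rpow_one]
      rw [← e1, Real.rpow_sub hρ0, h3]
      field_simp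
    have : ρ ^ (α - N) * ∫ y, f y ≤ ρ ^ (α - N) * B := by gcongr
    calc _ ≤ K * (A * ρ ^ α) + ρ ^ (α - N) * B := by linarith
      _ = _ := by rw [e1, e2]; ring

set_option maxHeartbeats 1000000

/-- Exterior estimate on the nonlocal Choquard term for radial functions:
the key ingredient of the localized virial argument for radial blowup. -/
theorem choquard_exterior_estimate (N : ℕ) (hN : 3 ≤ N) (α p : ℝ)
    (hα0 : 0 < α) (hαN : α < N)
    (hp1 : 2 ≤ p) (hp2 : p < ((N : ℝ) + α) / ((N : ℝ) - 2)) :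
    ∀ M > (0 : ℝ), ∃ C > (0 : ℝ), ∀ u : EuclideanSpace ℝ (Fin N) → ℂ,
      ContDiff ℝ (⊤ : ℕ∞) u → HasCompactSupport u →
      (∀ x y : EuclideanSpace ℝ (Fin N), ‖x‖ = ‖y‖ → u x = u y) →
      Real.sqrt (∫ x, ‖u x‖ ^ 2) ≤ M →
      ∀ R > (1 : ℝ),
      (∫ x in {x : EuclideanSpace ℝ (Fin N) | R < ‖x‖},
          rieszConv N α p u x * ‖u x‖ ^ p) ≤
        C * (R ^ (-(((N : ℝ) - 1) * (p - ((N : ℝ) + α) / N))) *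
              Real.sqrt (∫ x, gradSq u x) ^ (p - ((N : ℝ) + α) / N)
            + R ^ (-((N : ℝ) - α + ((N : ℝ) - 1) * (p - 2) / 2)) *
              Real.sqrt (∫ x, gradSq u x) ^ (((N : ℝ) + 1) * (p - 2) / 2)) := by
  intro M hM
  have hN3 : (3:ℝ) ≤ N := by exact_mod_cast hN
  have hN0 : (0:ℝ) < N := by linarith
  have hN2 : (0:ℝ) < N - 2 := by linarith
  have hp3 : p ≤ 2 * N / ((N:ℝ) - 2) := by
    refine hp2.le.trans ?_
    gcongr
    linarith
  obtain ⟨C1, hC1, strauss⟩ := ch_strauss N hN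
  obtain ⟨C2, hC2, gn⟩ := ch_GN N hN p hp1 hp3 M hM
  obtain ⟨K, hK, pot⟩ := ch_pot N hN α hα0 hαN
  have hA0 : 0 < rieszConst N α := by
    unfold rieszConst
    have h1 : 0 < Real.Gamma (((N:ℝ) - α) / 2) := Real.Gamma_pos_of_pos (by linarith)
    have h2 : 0 < Real.Gamma (α / 2) := Real.Gamma_pos_of_pos (by linarith)
    have := Real.pi_pos
    positivity
  set 𝒜 := rieszConst N α with h𝒜
  set q : ℝ := p - ((N : ℝ) + α) / N with hq
  set c : ℝ := C1 * M * 2 ^ ((N:ℝ) - 1) with hc0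
  have hcpos : 0 < c := by positivity
  set k1 : ℝ := 𝒜 * K * (M ^ 2) ^ (1 + α / N) * c ^ q with hk1
  set k2 : ℝ := 𝒜 * (2 ^ ((N:ℝ) - α) * C2) * M ^ 2 * c ^ ((p - 2) / 2) with hk2
  have hk1p : 0 < k1 := by positivity
  have hk2p : 0 < k2 := by positivity
  refine ⟨k1 + k2, by positivity, fun u hu hcs hr huM R hR => ?_⟩
  have hR0 : 0 < R := by linarith
  set G := √(∫ x, gradSq u x) with hG
  have hG0 : 0 ≤ G := Real.sqrt_nonneg _
  set S : ℝ := c * R ^ (-((N:ℝ) - 1)) * G with hS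
  have hS0 : 0 ≤ S := by positivity
  have hup : ∀ y, R / 2 < ‖y‖ → ‖u y‖ ^ 2 ≤ S := by
    intro y hy
    have hy0 : y ≠ 0 := by
      rintro rfl
      simp at hy; linarith
    have h1 := strauss u hu hcs hr y hy0
    have h2 : (R / 2) ^ (N - 1) * ‖u y‖ ^ 2 ≤ C1 * (M * G) := by
      refine le_trans ?_ (h1.trans ?_)
      · gcongr
      · gcongr
    have h3 : (R / 2) ^ (N - 1) = R ^ ((N:ℝ) - 1) / 2 ^ ((N:ℝ) - 1) := by
      rw [← Real.div_rpow hR0.le (by norm_num), ← Real.rpow_natCast]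
      congr 1
      push_cast [Nat.cast_sub (show 1 ≤ N by omega)]
      ring
    rw [h3] at h2
    have hRp : 0 < R ^ ((N:ℝ) - 1) := by positivity
    have h2p : (0:ℝ) < 2 ^ ((N:ℝ) - 1) := by positivity
    rw [hS, hc0, Real.rpow_neg hR0.le]
    rw [div_mul_eq_mul_div, div_le_iff₀ h2p] at h2
    have h4 : C1 * M * 2 ^ ((N:ℝ) - 1) * (R ^ ((N:ℝ) - 1))⁻¹ * G
      = (C1 * (M * G) * 2 ^ ((N:ℝ) - 1)) / R ^ ((N:ℝ) - 1) := by field_simp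
    rw [h4, le_div_iff₀ hRp]
    linarith
  have hmeas : MeasurableSet {x : EuclideanSpace ℝ (Fin N) | R < ‖x‖} :=
    measurableSet_lt measurable_const measurable_norm
  have hmeas2 : MeasurableSet {x : EuclideanSpace ℝ (Fin N) | R / 2 < ‖x‖} :=
    measurableSet_lt measurable_const measurable_norm
  rcases hG0.eq_or_lt with hGz | hGpos
  · have hSz : S = 0 := by rw [hS, ← hGz, mul_zero]
    have : ∫ x in {x : EuclideanSpace ℝ (Fin N) | R < ‖x‖}, rieszConv N α p u x * ‖u x‖ ^ p = 0 := by
      apply setIntegral_eq_zero_of_forall_eq_zero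
      intro x hx
      have hx' : R < ‖x‖ := hx
      have h1 := hup x (by linarith)
      rw [hSz] at h1
      have h2 : ‖u x‖ = 0 := by
        have := sq_nonneg ‖u x‖
        exact pow_eq_zero_iff (two_ne_zero) |>.mp (le_antisymm h1 this)
      rw [h2, Real.zero_rpow (by linarith), mul_zero]
    rw [this]
    positivity
  have hSpos : 0 < S := by positivity
  set A : ℝ := S ^ (p / 2) with hA
  set B : ℝ := S ^ ((p - 2) / 2) * M ^ 2 with hB
  have hApos : 0 < A := by positivity
  have hBpos : 0 < B := by positivity
  obtain ⟨hip, -⟩ := ch_lint hu.continuous hcs (r := p) (by linarith)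
  obtain ⟨hi2, -⟩ := ch_lint hu.continuous hcs (r := 2) (by norm_num)
  have hM2 : ∫ x, ‖u x‖ ^ (2:ℝ) ≤ M ^ 2 := by
    simp only [Real.rpow_two]
    exact (Real.sqrt_le_left hM.le).mp huM
  have hpw1 : ∀ y, R / 2 < ‖y‖ → ‖u y‖ ^ p ≤ A := by
    intro y hy
    have : ‖u y‖ ^ p = (‖u y‖ ^ 2) ^ (p / 2) := by
      rw [← Real.rpow_two, ← Real.rpow_mul (norm_nonneg _)]; congr 1; ring
    rw [this]
    exact Real.rpow_le_rpow (by positivity) (hup y hy) (by linarith)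
  have hpw2 : ∀ y, R / 2 < ‖y‖ → ‖u y‖ ^ p ≤ S ^ ((p - 2) / 2) * ‖u y‖ ^ (2:ℝ) := by
    intro y hy
    have : ‖u y‖ ^ p = (‖u y‖ ^ 2) ^ ((p - 2) / 2) * ‖u y‖ ^ (2:ℝ) := by
      rw [← Real.rpow_two, ← Real.rpow_mul (norm_nonneg _),
        ← Real.rpow_add_of_nonneg (norm_nonneg _) (by linarith) (by norm_num)]
      congr 1; ring
    rw [this]
    have h9 := Real.rpow_le_rpow (by positivity) (hup y hy) (show 0 ≤ (p - 2) / 2 by linarith)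
    exact mul_le_mul_of_nonneg_right h9 (by positivity)
  set f : EuclideanSpace ℝ (Fin N) → ℝ :=
    ({x : EuclideanSpace ℝ (Fin N) | R / 2 < ‖x‖}).indicator (fun y => ‖u y‖ ^ p) with hf
  have hf0 : ∀ y, 0 ≤ f y := fun y => Set.indicator_nonneg (fun y _ => by positivity) y
  have hfA : ∀ y, f y ≤ A := by
    intro y
    by_cases hy : R / 2 < ‖y‖
    · simpa [hf, hy] using hpw1 y hy
    · simpa [hf, hy] using hApos.le
  have hfi : Integrable f := hip.indicator hmeas2
  have hfB : ∫ y, f y ≤ B := by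
    calc _ ≤ ∫ y, S ^ ((p - 2) / 2) * ‖u y‖ ^ (2:ℝ) := by
          apply integral_mono hfi (hi2.const_mul _)
          intro y
          by_cases hy : R / 2 < ‖y‖
          · simpa [hf, hy] using hpw2 y hy
          · simp only [hf, Set.indicator, Set.mem_ofPred_eq, hy, if_false]
            positivity
      _ ≤ _ := by
        rw [integral_const_mul, hB]
        gcongr
  have hgn := gn u hu hcs huM
  set D : ℝ := 𝒜 * (K * (A ^ (1 - α / N) * B ^ (α / N)) +
    (R / 2) ^ (α - N) * (C2 * G ^ ((N:ℝ) * (p - 2) / 2))) with hD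
  have hD0 : 0 ≤ D := by positivity
  have hconv : ∀ x, R < ‖x‖ → rieszConv N α p u x ≤ D := by
    intro x hx
    obtain ⟨F, hFi, hFle, hFint⟩ := pot f A B hApos hBpos hf0 hfA hfi hfB x
    unfold rieszConv
    rw [← h𝒜]
    simp only [mul_assoc]
    rw [integral_const_mul, hD]
    refine mul_le_mul_of_nonneg_left ?_ hA0.le
    calc _ ≤ ∫ y, (F y + (R / 2) ^ (α - N) * ‖u y‖ ^ p) := by
          apply integral_mono_of_nonneg
          · exact Filter.Eventually.of_forall fun y => by positivity
          · exact hFi.add (hip.const_mul _)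
          · refine Filter.Eventually.of_forall fun y => ?_
            have h1 := hFle y
            by_cases hy : R / 2 < ‖y‖
            · have h2 : f y = ‖u y‖ ^ p := by simp [hf, hy]
              rw [h2] at h1
              have : 0 ≤ (R / 2) ^ (α - N) * ‖u y‖ ^ p := by positivity
              simp only
              linarith
            · have h2 : f y = 0 := by simp [hf, hy]
              rw [h2, mul_zero] at h1
              have h3 : R / 2 ≤ ‖x - y‖ := by
                have := norm_sub_norm_le x y
                linarith
              have h4 : ‖x - y‖ ^ (α - N) ≤ (R / 2) ^ (α - N) :=
                Real.rpow_le_rpow_of_nonpos (by linarith) h3 (by linarith)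
              have := mul_le_mul_of_nonneg_right h4 (show 0 ≤ ‖u y‖ ^ p by positivity)
              simp only
              linarith
      _ = (∫ y, F y) + (R / 2) ^ (α - N) * ∫ y, ‖u y‖ ^ p := by
        rw [integral_add hFi (hip.const_mul _), integral_const_mul]
      _ ≤ _ := by gcongr
  have hmain : ∫ x in {x : EuclideanSpace ℝ (Fin N) | R < ‖x‖}, rieszConv N α p u x * ‖u x‖ ^ p
      ≤ D * B := by
    have hconv0 : ∀ x, 0 ≤ rieszConv N α p u x := by
      intro x
      unfold rieszConv
      rw [← h𝒜]
      exact integral_nonneg fun y => by positivity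
    rw [← integral_indicator hmeas]
    calc _ ≤ ∫ x, D * f x := by
          apply integral_mono_of_nonneg
          · exact Filter.Eventually.of_forall fun x => Set.indicator_nonneg
              (fun x _ => mul_nonneg (hconv0 x) (by positivity)) x
          · exact hfi.const_mul _
          · refine Filter.Eventually.of_forall fun x => ?_
            by_cases hx : R < ‖x‖
            · have hx2 : R / 2 < ‖x‖ := by linarith
              simp only [hf, Set.indicator, Set.mem_ofPred_eq, hx, hx2, if_true]
              have := hconv x hx
              gcongr
            · simp only [Set.indicator, Set.mem_ofPred_eq, hx, if_false]
              exact mul_nonneg hD0 (hf0 x)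
      _ ≤ _ := by
        rw [integral_const_mul]
        gcongr
  refine hmain.trans ?_
  have hSpow : ∀ s : ℝ, S ^ s = c ^ s * R ^ (-(((N:ℝ) - 1) * s)) * G ^ s := by
    intro s
    rw [hS, Real.mul_rpow (by positivity) hG0, Real.mul_rpow hcpos.le (by positivity),
      ← Real.rpow_mul hR0.le]
    ring_nf
  clear_value S
  have e1 : A ^ (1 - α / N) * B ^ (α / N) * B = S ^ q * (M ^ 2) ^ (1 + α / N) := by
    have hB2 : B ^ (α / N) * B = B ^ (1 + α / N) := by
      rw [Real.rpow_add hBpos, Real.rpow_one]; ring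
    rw [mul_assoc, hB2, hA, hB, Real.mul_rpow (by positivity) (by positivity),
      ← Real.rpow_mul hS0, ← Real.rpow_mul hS0, ← mul_assoc, ← Real.rpow_add hSpos]
    congr 2
    rw [hq]; field_simp; ring
  have e2 : (R / 2) ^ (α - N) = R ^ (α - N) * 2 ^ ((N:ℝ) - α) := by
    rw [Real.div_rpow hR0.le (by norm_num), div_eq_mul_inv, ← Real.rpow_neg (by norm_num)]
    congr 2; ring
  have e3 : R ^ (-((N : ℝ) - α + ((N : ℝ) - 1) * (p - 2) / 2)) =
      R ^ (α - N) * R ^ (-(((N:ℝ) - 1) * ((p - 2) / 2))) := by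
    rw [← Real.rpow_add hR0]; congr 1; ring
  have e4 : G ^ (((N : ℝ) + 1) * (p - 2) / 2) = G ^ ((N:ℝ) * (p - 2) / 2) * G ^ ((p - 2) / 2) := by
    rw [← Real.rpow_add hGpos]; congr 1; ring
  have e5 : D * B = k1 * (R ^ (-(((N : ℝ) - 1) * q)) * G ^ q) +
      k2 * (R ^ (-((N : ℝ) - α + ((N : ℝ) - 1) * (p - 2) / 2)) *
              G ^ (((N : ℝ) + 1) * (p - 2) / 2)) := by
    have : D * B = 𝒜 * K * (A ^ (1 - α / N) * B ^ (α / N) * B) +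
      𝒜 * (R / 2) ^ (α - N) * (C2 * G ^ ((N:ℝ) * (p - 2) / 2)) * B := by rw [hD]; ring
    rw [this, e1, e2, e3, e4, hB, hSpow, hSpow, hk1, hk2]
    ring
  rw [e5]
  have x1 : 0 ≤ R ^ (-(((N : ℝ) - 1) * q)) * G ^ q := by positivity
  have x2 : 0 ≤ R ^ (-((N : ℝ) - α + ((N : ℝ) - 1) * (p - 2) / 2)) *
              G ^ (((N : ℝ) + 1) * (p - 2) / 2) := by positivity
  nlinarith [mul_nonneg hk1p.le x2, mul_nonneg hk2p.le x1]
end
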